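/- Suppose H_0 is twice continuously differentiable on [0,1]. Then with η := 4g Σ_{i=1,3,5,…} 1/((G+i)·i·(i+2)) ∈ (0,1), there exists a constant C > 0 such that for every n ≥ 0 and every x ∈ [0,1], |H_n(x) − (3 log G)^{−1} log((G+1)(G−1+x)/((G−1)(G+1−x)))| ≤ C · η^n. -/

import Mathlib

open Real MeasureTheory Filter Set
open scoped ENNReal NNReal Classical

namespace OCF

/-- The golden ratio `G = (1+√5)/2`. -/
noncomputable def G : ℝ := (1 + Real.sqrt 5) / 2

/-- `g = (√5-1)/2`. -/
noncomputable def gg : ℝ := (Real.sqrt 5 - 1) / 2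

/-- The odd Gauss map. -/
noncomputable def T (x : ℝ) : ℝ :=
  if x = 0 then 0
  else if Odd ⌊1 / x⌋ then Int.fract (1 / x) else 1 - Int.fract (1 / x)

/-- `eps x n` is `ε_n(x)`; by convention `ε_0(x) = 1`. -/
noncomputable def eps (x : ℝ) : ℕ → ℤ
  | 0 => 1
  | n + 1 => if Odd ⌊1 / (T^[n] x)⌋ then 1 else -1

/-- `a x n` is the `n`-th odd partial quotient `a_n(x)` (for `n ≥ 1`). -/
noncomputable def a (x : ℝ) : ℕ → ℤ
  | 0 => 1
  | n + 1 => if Odd ⌊1 / (T^[n] x)⌋ then ⌊1 / (T^[n] x)⌋ else 1 + ⌊1 / (T^[n] x)⌋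

/-- `r x n = r_n(x) = a_n(x) + ε_n(x) Tⁿ(x)` for `n ≥ 1`. -/
noncomputable def r (x : ℝ) (n : ℕ) : ℝ := (a x n : ℝ) + (eps x n : ℝ) * T^[n] x

/-- The distribution functions: `H μ 0 x = μ([0,x])` and, for `n ≥ 1`,
`H μ n x = μ({y ∈ (0,1) : y irrational, 1/r_{n+1}(y) < x})`. -/
noncomputable def H (μ : Measure ℝ) : ℕ → ℝ → ℝ
  | 0 => fun x => (μ (Set.Icc 0 x)).toReal
  | n + 1 => fun x =>
      (μ {y | y ∈ Set.Ioo (0 : ℝ) 1 ∧ Irrational y ∧ 1 / r y (n + 2) < x}).toReal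

/-- `h μ n x = H_n'(x) / ((x+G-1)⁻¹ - (x-G-1)⁻¹)`, the derivative being taken within `[0,1]`. -/
noncomputable def h (μ : Measure ℝ) (n : ℕ) (x : ℝ) : ℝ :=
  derivWithin (H μ n) (Set.Icc 0 1) x / ((x + G - 1)⁻¹ - (x - G - 1)⁻¹)

/-- `η = 4g Σ_{i odd} 1/((G+i) i (i+2))`. -/
noncomputable def eta : ℝ :=
  4 * gg * ∑' m : ℕ, 1 / ((G + (2 * (m : ℝ) + 1)) * (2 * (m : ℝ) + 1) * (2 * (m : ℝ) + 3))

end OCF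

open OCF


namespace OCF

lemma G_sq : G ^ 2 = G + 1 := by
  unfold G
  have h := Real.sq_sqrt (show (0 : ℝ) ≤ 5 by norm_num)
  nlinarith

lemma G_lo : (1.61803 : ℝ) < G := by
  unfold G
  have h : (2.23606 : ℝ) < Real.sqrt 5 := by
    apply Real.lt_sqrt_of_sq_lt; norm_num
  linarith

lemma G_hi : G < (1.61804 : ℝ) := by
  unfold G
  have h : Real.sqrt 5 < 2.23608 := by
    rw [Real.sqrt_lt' (by norm_num)]; norm_num
  linarith

lemma gg_eq : gg = G - 1 := by unfold gg G; ring

/-- general term of `eta`. -/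
noncomputable def et (m : ℕ) : ℝ :=
  1 / ((G + (2 * (m : ℝ) + 1)) * (2 * (m : ℝ) + 1) * (2 * (m : ℝ) + 3))

lemma et_nonneg (m : ℕ) : 0 ≤ et m := by
  have := G_lo
  unfold et; positivity

lemma hasSum_tele (f : ℕ → ℝ) (hf : Antitone f) (h0 : Tendsto f atTop (nhds 0)) :
    HasSum (fun m => f m - f (m + 1)) (f 0) := by
  rw [hasSum_iff_tendsto_nat_of_nonneg]
  · have : ∀ n, ∑ i ∈ Finset.range n, (f i - f (i + 1)) = f 0 - f n := by
      intro n
      rw [Finset.sum_range_sub']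
    simp_rw [this]
    simpa using (tendsto_const_nhds (x := f 0)).sub h0
  · intro i
    have := hf (Nat.le_succ i)
    simp only [Nat.succ_eq_add_one] at this
    linarith

lemma hasSum_inv (c : ℝ) (hc : 0 < c) :
    HasSum (fun m : ℕ => 1 / (2 * (m : ℝ) + c) - 1 / (2 * (m : ℝ) + c + 2)) (1 / c) := by
  have := hasSum_tele (fun m : ℕ => 1 / (2 * (m : ℝ) + c)) ?_ ?_
  · convert this using 2
    · push_cast; ring_nf
    · simp
  · intro a b hab
    have : (a : ℝ) ≤ b := by exact_mod_cast hab
    apply one_div_le_one_div_of_le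
    · positivity
    · linarith
  · apply Tendsto.div_atTop tendsto_const_nhds
    apply tendsto_atTop_add_const_right
    exact (tendsto_natCast_atTop_atTop).const_mul_atTop (by norm_num)

lemma et_le (m : ℕ) :
    et m ≤ (1 / 5) * (1 / (2 * (m : ℝ) + 1) - 1 / (2 * (m : ℝ) + 1 + 2)) := by
  have hG := G_lo
  have hm : (0 : ℝ) ≤ m := Nat.cast_nonneg m
  unfold et
  have h1 : (0 : ℝ) < 2 * (m : ℝ) + 1 := by positivity
  have h2 : (0 : ℝ) < 2 * (m : ℝ) + 3 := by positivity
  have : (1 / 5 : ℝ) * (1 / (2 * (m : ℝ) + 1) - 1 / (2 * (m : ℝ) + 1 + 2)) =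
      1 / ((5 / 2) * (2 * (m : ℝ) + 1) * (2 * (m : ℝ) + 3)) := by
    have h3 : (2 * (m : ℝ) + 1 + 2) ≠ 0 := by positivity
    field_simp; ring
  rw [this]
  apply one_div_le_one_div_of_le
  · positivity
  · have : 5 / 2 ≤ G + (2 * (m : ℝ) + 1) := by linarith
    gcongr

lemma et_summable : Summable et :=
  Summable.of_nonneg_of_le et_nonneg et_le ((hasSum_inv 1 one_pos).summable.mul_left _)

lemma eta_eq : eta = 4 * gg * ∑' m, et m := rfl

lemma eta_lt_one : eta < 1 := by
  have h : ∑' m, et m ≤ (1 / 5) * (1 / 1) := by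
    rw [← ((hasSum_inv 1 one_pos).mul_left (1 / 5)).tsum_eq]
    exact Summable.tsum_le_tsum et_le et_summable ((hasSum_inv 1 one_pos).summable.mul_left _)
  rw [eta_eq, gg_eq]
  have := G_hi
  have := G_lo
  have h0 : 0 ≤ ∑' m, et m := tsum_nonneg et_nonneg
  nlinarith

lemma eta_ge : (0.37 : ℝ) ≤ eta := by
  have h : ∑ m ∈ Finset.range 7, et m ≤ ∑' m, et m :=
    et_summable.sum_le_tsum _ (fun i _ => et_nonneg i)
  have hl := G_lo
  have hh := G_hi
  have h2 : (0.1497 : ℝ) ≤ ∑ m ∈ Finset.range 7, et m := by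
    have key : ∀ m : ℕ, 1 / ((1.61804 + (2 * (m : ℝ) + 1)) * (2 * (m : ℝ) + 1) * (2 * (m : ℝ) + 3)) ≤ et m := by
      intro m
      unfold et
      apply one_div_le_one_div_of_le
      · positivity
      · gcongr
    refine le_trans ?_ (Finset.sum_le_sum (fun i _ => key i))
    simp only [Finset.sum_range_succ, Finset.sum_range_zero]
    norm_num
  rw [eta_eq, gg_eq]
  nlinarith

end OCF

namespace OCF

noncomputable def PP (x : ℝ) : ℝ := (x + G - 1) * (G + 1 - x) / (2 * G)
noncomputable def q (u : ℝ) : ℝ := 1 / (u + G - 2) - 1 / (u + G)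
noncomputable def V (u : ℝ) : ℝ := 1 / (u + G - 1) + 3 / (u + G + 1)
noncomputable def W (y : ℝ) : ℝ := y / (1 + (G - 1) * y) + 3 * y / (1 + (G + 1) * y)
noncomputable def BB (x : ℝ) : ℝ := 2 * PP x * (1 / (x + G) + 1 / (2 - x + G))

lemma W_inv {u : ℝ} (hu : 0 < u) : W (1 / u) = V u := by
  have hG := G_lo
  unfold W V
  have h1 : u + G - 1 ≠ 0 := by linarith
  have h2 : u + G + 1 ≠ 0 := by linarith
  have h3 : 1 + (G - 1) * (1 / u) ≠ 0 := by
    have : 0 < 1 / u := by positivity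
    nlinarith
  have h4 : 1 + (G + 1) * (1 / u) ≠ 0 := by
    have : 0 < 1 / u := by positivity
    nlinarith
  have e1 : 1 + (G - 1) * (1 / u) = (u + G - 1) / u := by field_simp; ring
  have e2 : 1 + (G + 1) * (1 / u) = (u + G + 1) / u := by field_simp; ring
  rw [e1, e2]
  field_simp

lemma q_eq {u : ℝ} (hu : 1 ≤ u) : q u = 2 / ((u + G - 2) * (u + G)) := by
  have hG := G_lo
  have h1 : u + G - 2 ≠ 0 := by linarith
  have h2 : u + G ≠ 0 := by linarith
  unfold q
  field_simp; ring

lemma q_nonneg {u : ℝ} (hu : 1 ≤ u) : 0 ≤ q u := by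
  have hG := G_lo
  rw [q_eq hu]
  have h1 : 0 < u + G - 2 := by linarith
  have h2 : 0 < u + G := by linarith
  positivity

lemma q_anti {u v : ℝ} (hu : 1 ≤ u) (huv : u ≤ v) : q v ≤ q u := by
  have hG := G_lo
  rw [q_eq hu, q_eq (hu.trans huv)]
  have h1 : 0 < u + G - 2 := by linarith
  have h2 : 0 < u + G := by linarith
  have h3 : 0 < v + G - 2 := by linarith
  gcongr

lemma qV {u : ℝ} (hu : 1 ≤ u) :
    q u * V u = 2 * q u - 2 * (1 / (u + G - 1) - 1 / (u + G + 1)) := by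
  have hG := G_lo
  have h1 : u + G - 2 ≠ 0 := by linarith
  have h2 : u + G ≠ 0 := by linarith
  have h3 : u + G - 1 ≠ 0 := by linarith
  have h4 : u + G + 1 ≠ 0 := by linarith
  unfold q V
  field_simp; ring

lemma hasSum_q1 {x : ℝ} (hx : 0 ≤ x) :
    HasSum (fun m : ℕ => q (2 * (m : ℝ) + 1 + x)) (1 / (x + G - 1)) := by
  have hG := G_lo
  convert hasSum_inv (x + G - 1) (by linarith) using 2
  unfold q
  ring_nf

lemma hasSum_q2 {x : ℝ} (hx : x ≤ 1) :
    HasSum (fun m : ℕ => q (2 * (m : ℝ) + 3 - x)) (1 / (G + 1 - x)) := by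
  have hG := G_lo
  convert hasSum_inv (G + 1 - x) (by linarith) using 2
  unfold q
  ring_nf

lemma PP_pos {x : ℝ} (h0 : 0 ≤ x) (h1 : x ≤ 1) : 0 < PP x := by
  have hG := G_lo
  have a : 0 < x + G - 1 := by linarith
  have b : 0 < G + 1 - x := by linarith
  unfold PP; positivity

lemma PP_eq (x : ℝ) : PP x = (G ^ 2 - (1 - x) ^ 2) / (2 * G) := by
  unfold PP; ring

lemma PP_mono {x y : ℝ} (hxy : x ≤ y) (h1 : y ≤ 1) : PP x ≤ PP y := by
  have hG := G_lo
  rw [PP_eq, PP_eq]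
  have : (1 - y) ^ 2 ≤ (1 - x) ^ 2 := by nlinarith
  gcongr

lemma PP_rho {x : ℝ} (h0 : 0 ≤ x) (h1 : x ≤ 1) :
    PP x * (1 / (x + G - 1) + 1 / (G + 1 - x)) = 1 := by
  have hG := G_lo
  have a : x + G - 1 ≠ 0 := by linarith
  have b : G + 1 - x ≠ 0 := by linarith
  unfold PP; field_simp; ring

lemma tailB_mono {c x y : ℝ} (hc : G ≤ c) (h0 : 0 ≤ x) (hxy : x ≤ y) (h1 : y ≤ 1) :
    PP x * (1 / (c - 1 + x) + 1 / (c + 1 - x)) ≤ PP y * (1 / (c - 1 + y) + 1 / (c + 1 - y)) := by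
  have hG := G_lo
  have key : ∀ z, 0 ≤ z → z ≤ 1 → PP z * (1 / (c - 1 + z) + 1 / (c + 1 - z)) =
      (c / G) * (1 - (c ^ 2 - G ^ 2) / (c ^ 2 - (1 - z) ^ 2)) := by
    intro z hz0 hz1
    have a : c - 1 + z ≠ 0 := by linarith
    have b : c + 1 - z ≠ 0 := by linarith
    have d : c ^ 2 - (1 - z) ^ 2 ≠ 0 := by
      have : c ^ 2 - (1 - z) ^ 2 = (c - 1 + z) * (c + 1 - z) := by ring
      rw [this]; positivity
    rw [PP_eq]
    field_simp
    ring
  rw [key x h0 (hxy.trans h1), key y (h0.trans hxy) h1]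
  have h2 : 0 ≤ c ^ 2 - G ^ 2 := by nlinarith
  have h3 : 0 < c ^ 2 - (1 - x) ^ 2 := by nlinarith
  have h4 : c ^ 2 - (1 - x) ^ 2 ≤ c ^ 2 - (1 - y) ^ 2 := by nlinarith
  have h5 : 0 ≤ c / G := by apply div_nonneg <;> linarith
  apply mul_le_mul_of_nonneg_left _ h5
  have := div_le_div_of_nonneg_left h2 h3 h4
  linarith

lemma tailA_mono {c x y : ℝ} (hc : G + 1 ≤ c) (h0 : 0 ≤ x) (hxy : x ≤ y) (h1 : y ≤ 1) :
    PP x * (1 / (c + x) + 1 / (c - x)) ≤ PP y * (1 / (c + y) + 1 / (c - y)) := by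
  have hG := G_lo
  have key : ∀ z, 0 ≤ z → z ≤ 1 → (1 / (c + z) + 1 / (c - z)) = 2 * c / (c ^ 2 - z ^ 2) := by
    intro z hz0 hz1
    have a : c + z ≠ 0 := by linarith
    have b : c - z ≠ 0 := by linarith
    have d : c ^ 2 - z ^ 2 ≠ 0 := by
      have : c ^ 2 - z ^ 2 = (c + z) * (c - z) := by ring
      rw [this]; positivity
    field_simp
    ring
  rw [key x h0 (hxy.trans h1), key y (h0.trans hxy) h1]
  have h3 : 0 < c ^ 2 - y ^ 2 := by nlinarith
  have h4 : c ^ 2 - y ^ 2 ≤ c ^ 2 - x ^ 2 := by nlinarith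
  apply mul_le_mul (PP_mono hxy h1) _ _ (PP_pos (h0.trans hxy) h1).le
  · apply div_le_div_of_nonneg_left _ h3 h4
    linarith
  · have : 0 < c ^ 2 - x ^ 2 := by linarith
    have : 0 < c := by linarith
    positivity

/-- partial sums -/
lemma partial_sum (m : ℕ) {x : ℝ} (h0 : 0 ≤ x) (h1 : x ≤ 1) :
    ∑ j ∈ Finset.range m, (PP x * q (2 * (j : ℝ) + 1 + x) + PP x * q (2 * (j : ℝ) + 3 - x)) =
      1 - PP x * (1 / ((2 * (m : ℝ) + G) - 1 + x) + 1 / ((2 * (m : ℝ) + G) + 1 - x)) := by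
  induction m with
  | zero =>
    have := PP_rho h0 h1
    simp only [Finset.range_zero, Finset.sum_empty, Nat.cast_zero, mul_zero, zero_add]
    rw [show G - 1 + x = x + G - 1 by ring, this]; ring
  | succ m ih =>
    rw [Finset.sum_range_succ, ih]
    unfold q
    push_cast
    ring_nf

lemma abel (d e φ ψ : ℕ → ℝ) (h1 : ∀ m, ψ m ≤ φ m) (h2 : ∀ m, φ (m + 1) ≤ ψ m)
    (h3 : ∀ m, 0 ≤ ψ m)
    (hD : ∀ m, ∑ j ∈ Finset.range m, (d j + e j) ≤ 0)
    (hE : ∀ m, ∑ j ∈ Finset.range m, (d j + e j) + d m ≤ 0) (m : ℕ) :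
    ∑ j ∈ Finset.range m, (d j * φ j + e j * ψ j) ≤ 0 := by
  have key : ∀ m, ∑ j ∈ Finset.range (m + 1), (d j * φ j + e j * ψ j) ≤
      (∑ j ∈ Finset.range (m + 1), (d j + e j)) * ψ m := by
    intro m
    induction m with
    | zero =>
      have := hE 0
      simp at this
      simp
      nlinarith [h1 0]
    | succ m ih =>
      rw [Finset.sum_range_succ, Finset.sum_range_succ _ (m + 1)]
      have a := hD (m + 1)
      have b := hE (m + 1)
      nlinarith [h1 (m + 1), h2 m, mul_nonneg_of_nonpos_of_nonpos a (sub_nonpos.2 (h2 m)),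
        mul_nonneg_of_nonpos_of_nonpos b (sub_nonpos.2 (h1 (m + 1)))]
  cases m with
  | zero => simp
  | succ m => exact (key m).trans (mul_nonpos_of_nonpos_of_nonneg (hD _) (h3 m))

/-- The transfer operator, normalised. -/
noncomputable def UT (h : ℝ → ℝ) (x : ℝ) (m : ℕ) : ℝ :=
  PP x * q (2 * (m : ℝ) + 1 + x) * h (1 / (2 * (m : ℝ) + 1 + x)) +
    PP x * q (2 * (m : ℝ) + 3 - x) * h (1 / (2 * (m : ℝ) + 3 - x))

noncomputable def U (h : ℝ → ℝ) (x : ℝ) : ℝ := ∑' m, UT h x m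

lemma al_mem (m : ℕ) {x : ℝ} (h0 : 0 ≤ x) : 1 / (2 * (m : ℝ) + 1 + x) ∈ Icc (0 : ℝ) 1 := by
  have : (0 : ℝ) ≤ m := Nat.cast_nonneg m
  constructor
  · positivity
  · rw [div_le_one (by positivity)]; linarith

lemma be_mem (m : ℕ) {x : ℝ} (h1 : x ≤ 1) : 1 / (2 * (m : ℝ) + 3 - x) ∈ Icc (0 : ℝ) 1 := by
  have : (0 : ℝ) ≤ m := Nat.cast_nonneg m
  have h2 : 0 < 2 * (m : ℝ) + 3 - x := by linarith
  constructor
  · positivity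
  · rw [div_le_one h2]; linarith

lemma summable_gen (f g : ℕ → ℝ) (C : ℝ) (hf : Summable f) (hf0 : ∀ m, 0 ≤ f m)
    (hg : ∀ m, |g m| ≤ C) : Summable (fun m => f m * g m) := by
  apply Summable.of_norm_bounded (hf.mul_left C)
  intro m
  rw [Real.norm_eq_abs, abs_mul, abs_of_nonneg (hf0 m), mul_comm]
  exact mul_le_mul_of_nonneg_right (hg m) (hf0 m)

lemma p_nonneg (m : ℕ) {x : ℝ} (h0 : 0 ≤ x) (h1 : x ≤ 1) : 0 ≤ PP x * q (2 * (m : ℝ) + 1 + x) := by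
  have : (0 : ℝ) ≤ m := Nat.cast_nonneg m
  exact mul_nonneg (PP_pos h0 h1).le (q_nonneg (by linarith))

lemma r_nonneg (m : ℕ) {x : ℝ} (h0 : 0 ≤ x) (h1 : x ≤ 1) : 0 ≤ PP x * q (2 * (m : ℝ) + 3 - x) := by
  have : (0 : ℝ) ≤ m := Nat.cast_nonneg m
  exact mul_nonneg (PP_pos h0 h1).le (q_nonneg (by linarith))

lemma sum_p {x : ℝ} (h0 : 0 ≤ x) (a : ℕ → ℝ) (C : ℝ) (ha : ∀ m, |a m| ≤ C) (h1 : x ≤ 1) :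
    Summable (fun m : ℕ => PP x * q (2 * (m : ℝ) + 1 + x) * a m) :=
  summable_gen _ _ C ((hasSum_q1 h0).summable.mul_left _) (fun m => p_nonneg m h0 h1) ha

lemma sum_r {x : ℝ} (h0 : 0 ≤ x) (a : ℕ → ℝ) (C : ℝ) (ha : ∀ m, |a m| ≤ C) (h1 : x ≤ 1) :
    Summable (fun m : ℕ => PP x * q (2 * (m : ℝ) + 3 - x) * a m) :=
  summable_gen _ _ C ((hasSum_q2 h1).summable.mul_left _) (fun m => r_nonneg m h0 h1) ha

lemma UT_summable (h : ℝ → ℝ) (C : ℝ) (hC : ∀ t ∈ Icc (0 : ℝ) 1, |h t| ≤ C) {x : ℝ}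
    (h0 : 0 ≤ x) (h1 : x ≤ 1) : Summable (UT h x) :=
  (sum_p h0 _ C (fun m => hC _ (al_mem m h0)) h1).add
    (sum_r h0 _ C (fun m => hC _ (be_mem m h1)) h1)

lemma UW_hasSum {x : ℝ} (h0 : 0 ≤ x) (h1 : x ≤ 1) : HasSum (UT W x) (2 - BB x) := by
  have hG := G_lo
  have s1 := hasSum_q1 h0
  have s2 := hasSum_q2 h1
  have s3 := hasSum_inv (x + G) (by linarith)
  have s4 := hasSum_inv (2 - x + G) (by linarith)
  have := ((s1.add s2).mul_left (2 * PP x)).sub ((s3.add s4).mul_left (2 * PP x))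
  have e1 : (2 * PP x * (1 / (x + G - 1) + 1 / (G + 1 - x)) -
      2 * PP x * (1 / (x + G) + 1 / (2 - x + G))) = 2 - BB x := by
    have := PP_rho h0 h1
    unfold BB
    linear_combination 2 * this
  rw [e1] at this
  refine Eq.mp (congrArg (fun f : ℕ → ℝ => HasSum f (2 - BB x)) ?_) this
  funext m
  have hm : (0 : ℝ) ≤ m := Nat.cast_nonneg m
  unfold UT
  rw [W_inv (by linarith), W_inv (by linarith)]
  have k1 := qV (u := 2 * (m : ℝ) + 1 + x) (by linarith)
  have k2 := qV (u := 2 * (m : ℝ) + 3 - x) (by linarith)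
  rw [mul_assoc (PP x) (q _) (V _), mul_assoc (PP x) (q _) (V _), k1, k2]
  ring_nf

end OCF

namespace OCF

lemma dom_nonneg (φ : ℝ → ℝ) (hφ : MonotoneOn φ (Icc 0 1)) (hφ0 : 0 ≤ φ 0) {x y : ℝ}
    (h0 : 0 ≤ x) (hxy : x ≤ y) (h1 : y ≤ 1) (N : ℕ) :
    ∑ m ∈ Finset.range N, ((PP y * q (2 * (m : ℝ) + 1 + y) - PP x * q (2 * (m : ℝ) + 1 + x)) *
        φ (1 / (2 * (m : ℝ) + 1 + y)) +
      (PP y * q (2 * (m : ℝ) + 3 - y) - PP x * q (2 * (m : ℝ) + 3 - x)) *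
        φ (1 / (2 * (m : ℝ) + 3 - y))) ≤ 0 := by
  have hG := G_lo
  have hy0 : 0 ≤ y := h0.trans hxy
  have hx1 : x ≤ 1 := hxy.trans h1
  have hsum : ∀ m : ℕ, ∑ j ∈ Finset.range m,
      ((PP y * q (2 * (j : ℝ) + 1 + y) - PP x * q (2 * (j : ℝ) + 1 + x)) +
       (PP y * q (2 * (j : ℝ) + 3 - y) - PP x * q (2 * (j : ℝ) + 3 - x))) =
      PP x * (1 / ((2 * (m : ℝ) + G) - 1 + x) + 1 / ((2 * (m : ℝ) + G) + 1 - x)) -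
      PP y * (1 / ((2 * (m : ℝ) + G) - 1 + y) + 1 / ((2 * (m : ℝ) + G) + 1 - y)) := by
    intro m
    have e1 := partial_sum m hy0 h1
    have e2 := partial_sum m h0 hx1
    have : ∑ j ∈ Finset.range m,
      ((PP y * q (2 * (j : ℝ) + 1 + y) - PP x * q (2 * (j : ℝ) + 1 + x)) +
       (PP y * q (2 * (j : ℝ) + 3 - y) - PP x * q (2 * (j : ℝ) + 3 - x))) =
       ∑ j ∈ Finset.range m, (PP y * q (2 * (j : ℝ) + 1 + y) + PP y * q (2 * (j : ℝ) + 3 - y)) -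
       ∑ j ∈ Finset.range m, (PP x * q (2 * (j : ℝ) + 1 + x) + PP x * q (2 * (j : ℝ) + 3 - x)) := by
      rw [← Finset.sum_sub_distrib]
      apply Finset.sum_congr rfl
      intros; ring
    rw [this, e1, e2]; ring
  apply abel (fun m : ℕ => PP y * q (2 * (m : ℝ) + 1 + y) - PP x * q (2 * (m : ℝ) + 1 + x))
    (fun m : ℕ => PP y * q (2 * (m : ℝ) + 3 - y) - PP x * q (2 * (m : ℝ) + 3 - x))
    (fun m : ℕ => φ (1 / (2 * (m : ℝ) + 1 + y))) (fun m : ℕ => φ (1 / (2 * (m : ℝ) + 3 - y)))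
  · intro m
    have hm : (0 : ℝ) ≤ m := Nat.cast_nonneg m
    apply hφ (be_mem m h1) (al_mem m hy0)
    apply one_div_le_one_div_of_le <;> linarith
  · intro m
    have hm : (0 : ℝ) ≤ m := Nat.cast_nonneg m
    apply hφ (al_mem (m + 1) hy0) (be_mem m h1)
    push_cast
    apply one_div_le_one_div_of_le <;> linarith
  · intro m
    exact hφ0.trans (hφ (by simp) (be_mem m h1) (be_mem m h1).1)
  · intro m
    rw [hsum]
    have hm : (0 : ℝ) ≤ m := Nat.cast_nonneg m
    have := tailB_mono (c := 2 * (m : ℝ) + G) (by linarith) h0 hxy h1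
    linarith
  · intro m
    rw [hsum]
    have hm : (0 : ℝ) ≤ m := Nat.cast_nonneg m
    have := tailA_mono (c := 2 * (m : ℝ) + 1 + G) (by linarith) h0 hxy h1
    unfold q
    ring_nf at this ⊢
    linarith

lemma dom (φ : ℝ → ℝ) (hφ : MonotoneOn φ (Icc 0 1)) {x y : ℝ}
    (h0 : 0 ≤ x) (hxy : x ≤ y) (h1 : y ≤ 1) (S : ℝ)
    (hS : HasSum (fun m : ℕ =>
      ((PP y * q (2 * (m : ℝ) + 1 + y) - PP x * q (2 * (m : ℝ) + 1 + x)) *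
        φ (1 / (2 * (m : ℝ) + 1 + y)) +
      (PP y * q (2 * (m : ℝ) + 3 - y) - PP x * q (2 * (m : ℝ) + 3 - x)) *
        φ (1 / (2 * (m : ℝ) + 3 - y)))) S) : S ≤ 0 := by
  have hy0 : 0 ≤ y := h0.trans hxy
  have hx1 : x ≤ 1 := hxy.trans h1
  have a1 := ((hasSum_q1 hy0).add (hasSum_q2 h1)).mul_left (PP y)
  have a2 := ((hasSum_q1 h0).add (hasSum_q2 hx1)).mul_left (PP x)
  have a3 := (a1.sub a2).mul_left (φ 0)
  rw [PP_rho h0 hx1, PP_rho hy0 h1] at a3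
  have a4 := hS.sub a3
  have := a4.tendsto_sum_nat
  simp only [sub_self, mul_zero, sub_zero] at this
  refine le_of_tendsto' this ?_
  intro N
  have b := dom_nonneg (fun t => φ t - φ 0) (fun s hs t ht hst => by
    have := hφ hs ht hst
    simp only; linarith) (by simp) h0 hxy h1 N
  refine le_trans (le_of_eq ?_) b
  apply Finset.sum_congr rfl
  intros; ring

noncomputable def V1 (v : ℝ) : ℝ := 1 / (v + G - 1) ^ 2 + 3 / (v + G + 1) ^ 2

lemma V_diff {u v : ℝ} (hv : 1 ≤ v) (huv : v ≤ u) : V v - V u ≤ (u - v) * V1 v := by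
  have hG := G_lo
  have key : ∀ a : ℝ, 0 < v + a → 1 / (v + a) - 1 / (u + a) ≤ (u - v) * (1 / (v + a) ^ 2) := by
    intro a ha
    have hb : 0 < u + a := by linarith
    have : 1 / (v + a) - 1 / (u + a) = (u - v) * (1 / ((v + a) * (u + a))) := by
      field_simp; ring
    rw [this]
    apply mul_le_mul_of_nonneg_left _ (by linarith)
    apply one_div_le_one_div_of_le (by positivity)
    nlinarith
  have k1 := key (G - 1) (by linarith)
  have k2 := key (G + 1) (by linarith)
  unfold V V1
  rw [← add_sub_assoc, ← add_sub_assoc] at k1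
  rw [← add_assoc, ← add_assoc] at k2
  have e1 : 3 / (v + G + 1) = 3 * (1 / (v + G + 1)) := by ring
  have e2 : 3 / (u + G + 1) = 3 * (1 / (u + G + 1)) := by ring
  have e3 : 3 / (v + G + 1) ^ 2 = 3 * (1 / (v + G + 1) ^ 2) := by ring
  rw [e1, e2, e3]
  linarith

lemma V1_nonneg (v : ℝ) : 0 ≤ V1 v := by unfold V1; positivity

noncomputable def RR (v : ℝ) : ℝ := (4 / 3) / v ^ 3

lemma V1_le {v : ℝ} (hv : 2 ≤ v) : V1 v ≤ 1 / (v + 0.618) ^ 2 + 3 / (v + 2.618) ^ 2 := by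
  have hG := G_lo
  unfold V1
  have : v + 0.618 ≤ v + G - 1 := by linarith
  have : v + 2.618 ≤ v + G + 1 := by linarith
  have : 0 < v + 0.618 := by linarith
  have : 0 < v + 2.618 := by linarith
  gcongr

lemma q_le {v : ℝ} (hv : 2 ≤ v) : q v ≤ 2 / ((v - 0.382) * (v + 1.618)) := by
  have hG := G_lo
  rw [q_eq (by linarith)]
  have : v - 0.382 ≤ v + G - 2 := by linarith
  have : v + 1.618 ≤ v + G := by linarith
  have : 0 < v - 0.382 := by linarith
  have : 0 < v + 1.618 := by linarith
  have : 0 < v + G - 2 := by linarith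
  gcongr

lemma qV1_tail {v : ℝ} (hv : 4 ≤ v) : q v * V1 v ≤ RR v - RR (v + 2) := by
  have h1 := q_le (v := v) (by linarith)
  have h2 := V1_le (v := v) (by linarith)
  have h3 := V1_nonneg v
  have h4 : q v * V1 v ≤
      (2 / ((v - 0.382) * (v + 1.618))) * (1 / (v + 0.618) ^ 2 + 3 / (v + 2.618) ^ 2) := by
    apply mul_le_mul h1 h2 h3
    have : 0 < v - 0.382 := by linarith
    have : 0 < v + 1.618 := by linarith
    positivity
  refine h4.trans ?_
  unfold RR
  obtain ⟨t, rfl, ht⟩ : ∃ t, v = 4 + t ∧ 0 ≤ t := ⟨v - 4, by ring, by linarith⟩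
  rw [div_sub_div _ _ (by positivity) (by positivity), div_add_div _ _ (by positivity) (by positivity),
    div_mul_div_comm, div_le_div_iff₀]
  · rw [← sub_nonneg]
    ring_nf
    positivity
  · have : 0 < 4 + t - 0.382 := by linarith
    positivity
  · positivity

lemma RR_anti {u v : ℝ} (hu : 0 < u) (h : u ≤ v) : RR v ≤ RR u := by
  unfold RR; gcongr

lemma qV1_hasSum {y : ℝ} (h1 : y ≤ 1) :
    Summable (fun m : ℕ => q (2 * (m : ℝ) + 3 - y) * V1 (2 * (m : ℝ) + 3 - y)) ∧
    ∑' m : ℕ, q (2 * (m : ℝ) + 3 - y) * V1 (2 * (m : ℝ) + 3 - y) ≤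
      q (3 - y) * V1 (3 - y) + RR (5 - y) := by
  have hR := hasSum_tele (fun m : ℕ => RR (2 * (m : ℝ) + 5 - y)) (by
    intro a b hab
    have : (a : ℝ) ≤ b := by exact_mod_cast hab
    have : (0 : ℝ) ≤ a := Nat.cast_nonneg a
    exact RR_anti (by linarith) (by linarith)) (by
    unfold RR
    apply Tendsto.div_atTop tendsto_const_nhds
    apply (tendsto_pow_atTop (by norm_num)).comp
    simp only [add_sub_assoc]
    apply tendsto_atTop_add_const_right
    exact (tendsto_natCast_atTop_atTop).const_mul_atTop (by norm_num))
  have hle : ∀ m : ℕ, q (2 * ((m + 1 : ℕ) : ℝ) + 3 - y) * V1 (2 * ((m + 1 : ℕ) : ℝ) + 3 - y) ≤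
      RR (2 * (m : ℝ) + 5 - y) - RR (2 * ((m + 1 : ℕ) : ℝ) + 5 - y) := by
    intro m
    have hm : (0 : ℝ) ≤ m := Nat.cast_nonneg m
    have := qV1_tail (v := 2 * ((m + 1 : ℕ) : ℝ) + 3 - y) (by push_cast; linarith)
    convert this using 3 <;> push_cast <;> ring
  have hnn : ∀ m : ℕ, 0 ≤ q (2 * (m : ℝ) + 3 - y) * V1 (2 * (m : ℝ) + 3 - y) := by
    intro m
    have hm : (0 : ℝ) ≤ m := Nat.cast_nonneg m
    exact mul_nonneg (q_nonneg (by linarith)) (V1_nonneg _)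
  have hs1 : Summable (fun m : ℕ => q (2 * ((m + 1 : ℕ) : ℝ) + 3 - y) *
      V1 (2 * ((m + 1 : ℕ) : ℝ) + 3 - y)) :=
    Summable.of_nonneg_of_le (fun m => hnn (m + 1)) hle hR.summable
  have hs : Summable (fun m : ℕ => q (2 * (m : ℝ) + 3 - y) * V1 (2 * (m : ℝ) + 3 - y)) :=
    (summable_nat_add_iff (f := fun m : ℕ => q (2 * (m : ℝ) + 3 - y) * V1 (2 * (m : ℝ) + 3 - y)) 1).1 hs1
  refine ⟨hs, ?_⟩
  rw [hs.tsum_eq_zero_add]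
  have := Summable.tsum_le_tsum hle hs1 hR.summable
  rw [hR.tsum_eq] at this
  simp only [Nat.cast_zero, mul_zero, zero_add] at this ⊢
  linarith

end OCF

namespace OCF

lemma poly_T1 {y : ℝ} (h0 : 0 ≤ y) (h1 : 0 ≤ 1 - y) :
    2 * ((5.618 - y) ^ 2 + 3 * (3.618 - y) ^ 2) ≤ (0.0286 + 0.0342 * y + 0.0009 * y ^ 2 + 0.0344 * y ^ 3) *
      ((2.618 - y) * (4.618 - y) * ((3.618 - y) ^ 2 * (5.618 - y) ^ 2)) := by
  linarith [mul_nonneg (pow_nonneg h0 0) (pow_nonneg h1 9),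
      mul_nonneg (pow_nonneg h0 1) (pow_nonneg h1 8),
      mul_nonneg (pow_nonneg h0 2) (pow_nonneg h1 7),
      mul_nonneg (pow_nonneg h0 3) (pow_nonneg h1 6),
      mul_nonneg (pow_nonneg h0 4) (pow_nonneg h1 5),
      mul_nonneg (pow_nonneg h0 5) (pow_nonneg h1 4),
      mul_nonneg (pow_nonneg h0 6) (pow_nonneg h1 3),
      mul_nonneg (pow_nonneg h0 7) (pow_nonneg h1 2),
      mul_nonneg (pow_nonneg h0 8) (pow_nonneg h1 1),
      mul_nonneg (pow_nonneg h0 9) (pow_nonneg h1 0)]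

lemma poly_R {y : ℝ} (h0 : 0 ≤ y) (h1 : 0 ≤ 1 - y) :
    4 / 3 ≤ (0.0108 + 0.0056 * y + 0.0045 * y ^ 2) * (5 - y) ^ 3 := by
  linarith [mul_nonneg (pow_nonneg h0 0) (pow_nonneg h1 8),
      mul_nonneg (pow_nonneg h0 1) (pow_nonneg h1 7),
      mul_nonneg (pow_nonneg h0 2) (pow_nonneg h1 6),
      mul_nonneg (pow_nonneg h0 3) (pow_nonneg h1 5),
      mul_nonneg (pow_nonneg h0 4) (pow_nonneg h1 4),
      mul_nonneg (pow_nonneg h0 5) (pow_nonneg h1 3),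
      mul_nonneg (pow_nonneg h0 6) (pow_nonneg h1 2),
      mul_nonneg (pow_nonneg h0 7) (pow_nonneg h1 1),
      mul_nonneg (pow_nonneg h0 8) (pow_nonneg h1 0)]

lemma poly_Q {y : ℝ} (h0 : 0 ≤ y) (h1 : 0 ≤ 1 - y) :
    (1.61804 - 0.618 * (1 - y) ^ 2) * ((0.0286 + 0.0342 * y + 0.0009 * y ^ 2 + 0.0344 * y ^ 3) +
      (0.0108 + 0.0056 * y + 0.0045 * y ^ 2)) ≤ 0.0437 + 0.065 * y + 0.0847 * y ^ 2 := by
  linarith [mul_nonneg (pow_nonneg h0 0) (pow_nonneg h1 6),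
      mul_nonneg (pow_nonneg h0 1) (pow_nonneg h1 5),
      mul_nonneg (pow_nonneg h0 2) (pow_nonneg h1 4),
      mul_nonneg (pow_nonneg h0 3) (pow_nonneg h1 3),
      mul_nonneg (pow_nonneg h0 4) (pow_nonneg h1 2),
      mul_nonneg (pow_nonneg h0 5) (pow_nonneg h1 1),
      mul_nonneg (pow_nonneg h0 6) (pow_nonneg h1 0)]

lemma poly_b {z : ℝ} (h0 : 0 ≤ z) (h1 : 0 ≤ 1 - z) :
    27.4168 ≤ (0.584 + 0.171 * z + 0.046 * z ^ 2) * (6.854 - z) ^ 2 := by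
  linarith [mul_nonneg (pow_nonneg h0 0) (pow_nonneg h1 4),
      mul_nonneg (pow_nonneg h0 1) (pow_nonneg h1 3),
      mul_nonneg (pow_nonneg h0 2) (pow_nonneg h1 2),
      mul_nonneg (pow_nonneg h0 3) (pow_nonneg h1 1),
      mul_nonneg (pow_nonneg h0 4) (pow_nonneg h1 0)]

lemma poly_w {y : ℝ} (h0 : 0 ≤ y) (h1 : 0 ≤ 1 - y) :
    (0.584 * (1 - y) + 0.171 * (1 - y) ^ 3 + 0.046 * (1 - y) ^ 5 + (0.0437 + 0.065 * y + 0.0847 * y ^ 2)) *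
      ((1 + 0.61804 * y) ^ 2 * (1 + 2.61804 * y) ^ 2) ≤
      0.37 * ((1 + 2.61804 * y) ^ 2 + 3 * (1 + 0.61804 * y) ^ 2) := by
  linarith [mul_nonneg (pow_nonneg h0 0) (pow_nonneg h1 12),
      mul_nonneg (pow_nonneg h0 1) (pow_nonneg h1 11),
      mul_nonneg (pow_nonneg h0 2) (pow_nonneg h1 10),
      mul_nonneg (pow_nonneg h0 3) (pow_nonneg h1 9),
      mul_nonneg (pow_nonneg h0 4) (pow_nonneg h1 8),
      mul_nonneg (pow_nonneg h0 5) (pow_nonneg h1 7),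
      mul_nonneg (pow_nonneg h0 6) (pow_nonneg h1 6),
      mul_nonneg (pow_nonneg h0 7) (pow_nonneg h1 5),
      mul_nonneg (pow_nonneg h0 8) (pow_nonneg h1 4),
      mul_nonneg (pow_nonneg h0 9) (pow_nonneg h1 3),
      mul_nonneg (pow_nonneg h0 10) (pow_nonneg h1 2),
      mul_nonneg (pow_nonneg h0 11) (pow_nonneg h1 1),
      mul_nonneg (pow_nonneg h0 12) (pow_nonneg h1 0)]

noncomputable def QQ (y : ℝ) : ℝ := 0.0437 + 0.065 * y + 0.0847 * y ^ 2

lemma ee_le {y : ℝ} (h0 : 0 ≤ y) (h1 : y ≤ 1) :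
    2 * PP y * (q (3 - y) * V1 (3 - y) + RR (5 - y)) ≤ QQ y := by
  have hG := G_lo
  have hG' := G_hi
  have hs : 0 ≤ 1 - y := by linarith
  have a1 : 2 * PP y ≤ 1.61804 - 0.618 * (1 - y) ^ 2 := by
    have : 2 * PP y = G - (1 - y) ^ 2 * (G - 1) := by
      rw [PP_eq]
      have : G ≠ 0 := by linarith
      field_simp
      have := G_sq
      linear_combination (1 - y) ^ 2 * this
    rw [this]
    nlinarith [sq_nonneg (1 - y)]
  have a2 : q (3 - y) * V1 (3 - y) ≤ 0.0286 + 0.0342 * y + 0.0009 * y ^ 2 + 0.0344 * y ^ 3 := by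
    have b1 := q_le (v := 3 - y) (by linarith)
    have b2 := V1_le (v := 3 - y) (by linarith)
    have e1 : (0 : ℝ) < 2.618 - y := by linarith
    have e2 : (0 : ℝ) < 4.618 - y := by linarith
    have e3 : (0 : ℝ) < 3.618 - y := by linarith
    have e4 : (0 : ℝ) < 5.618 - y := by linarith
    rw [show (3 - y - 0.382) = 2.618 - y by ring, show (3 - y + 1.618) = 4.618 - y by ring] at b1
    rw [show (3 - y + 0.618) = 3.618 - y by ring, show (3 - y + 2.618) = 5.618 - y by ring] at b2
    refine (mul_le_mul b1 b2 (V1_nonneg _) (by positivity)).trans ?_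
    rw [div_add_div _ _ (by positivity) (by positivity), div_mul_div_comm, div_le_iff₀ (by positivity)]
    have := poly_T1 h0 hs
    linarith
  have a3 : RR (5 - y) ≤ 0.0108 + 0.0056 * y + 0.0045 * y ^ 2 := by
    unfold RR
    have : (0 : ℝ) < 5 - y := by linarith
    rw [div_le_iff₀ (by positivity)]
    exact poly_R h0 hs
  refine le_trans ?_ (poly_Q h0 hs)
  apply mul_le_mul a1 (add_le_add a2 a3)
  · have : 0 ≤ RR (5 - y) := by
      unfold RR
      have : (0 : ℝ) < 5 - y := by linarith
      positivity
    have := mul_nonneg (q_nonneg (u := 3 - y) (by linarith)) (V1_nonneg (3 - y))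
    linarith
  · nlinarith

noncomputable def JJ (x : ℝ) : ℝ :=
  BB x + (0.0437 * x + 0.065 / 2 * x ^ 2 + 0.0847 / 3 * x ^ 3) - 0.37 * W x

lemma BB_eq {x : ℝ} (h0 : 0 ≤ x) (h1 : x ≤ 1) :
    BB x = 2 * G * (1 - (2 * G + 1) / ((3 * G + 2) - (1 - x) ^ 2)) := by
  have hG := G_lo
  have hsq := G_sq
  have a : x + G ≠ 0 := by linarith
  have b : 2 - x + G ≠ 0 := by linarith
  have d : (3 * G + 2) - (1 - x) ^ 2 = (x + G) * (2 - x + G) := by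
    linear_combination (-1) * hsq
  rw [d]
  unfold BB PP
  have : G ≠ 0 := by linarith
  field_simp
  have h3 : G ^ 3 = 2 * G + 1 := by linear_combination (G + 1) * hsq
  have h4 : G ^ 4 = 3 * G + 2 := by linear_combination (G ^ 2 + G + 2) * hsq
  ring_nf
  rw [h3, hsq, h4]
  ring

lemma b_deriv {x : ℝ} (h0 : 0 ≤ x) (h1 : x ≤ 1) :
    HasDerivAt (fun x : ℝ => 2 * G * (1 - (2 * G + 1) / ((3 * G + 2) - (1 - x) ^ 2)))
      (2 * G * ((2 * G + 1) * (2 * (1 - x)) / ((3 * G + 2) - (1 - x) ^ 2) ^ 2)) x := by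
  have hG := G_lo
  have hD : (3 * G + 2) - (1 - x) ^ 2 ≠ 0 := by nlinarith
  have h := ((((hasDerivAt_id x).const_sub 1).pow 2).const_sub (3 * G + 2))
  have h2 := (((h.fun_inv hD).const_mul (2 * G + 1)).const_sub 1).const_mul (2 * G)
  simp only [id, div_eq_mul_inv] at h2 ⊢
  refine h2.congr_deriv ?_
  norm_num
  left
  ring

lemma b_le {x : ℝ} (h0 : 0 ≤ x) (h1 : x ≤ 1) :
    2 * G * ((2 * G + 1) * (2 * (1 - x)) / ((3 * G + 2) - (1 - x) ^ 2) ^ 2) ≤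
      0.584 * (1 - x) + 0.171 * (1 - x) ^ 3 + 0.046 * (1 - x) ^ 5 := by
  have hG := G_lo
  have hG' := G_hi
  have hsq := G_sq
  set s := 1 - x with hs
  have s0 : 0 ≤ s := by linarith
  have s1 : s ≤ 1 := by linarith
  have z1 : 0 ≤ 1 - s ^ 2 := by nlinarith
  have hp := poly_b (sq_nonneg s) z1
  have hD0 : 0 < 6.854 - s ^ 2 := by linarith
  have hD : 6.854 - s ^ 2 ≤ 3 * G + 2 - s ^ 2 := by linarith
  have hD1 : 0 < 3 * G + 2 - s ^ 2 := by linarith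
  rw [← mul_div_assoc, div_le_iff₀ (by positivity)]
  have e : 2 * G * ((2 * G + 1) * (2 * s)) = (12 * G + 8) * s := by
    linear_combination 8 * s * hsq
  rw [e]
  have k1 : (12 * G + 8) * s ≤ 27.4168 * s := by nlinarith
  have k2 : (6.854 - s ^ 2) ^ 2 ≤ (3 * G + 2 - s ^ 2) ^ 2 := by gcongr
  have k3 : 0 ≤ 0.584 + 0.171 * s ^ 2 + 0.046 * (s ^ 2) ^ 2 := by positivity
  have k4 := mul_le_mul_of_nonneg_left (hp.trans (mul_le_mul_of_nonneg_left k2 k3)) s0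
  linarith

lemma W_deriv {x : ℝ} (h0 : 0 ≤ x) :
    HasDerivAt W (1 / (1 + (G - 1) * x) ^ 2 + 3 / (1 + (G + 1) * x) ^ 2) x := by
  have hG := G_lo
  have d1 : 1 + (G - 1) * x ≠ 0 := by nlinarith
  have d2 : 1 + (G + 1) * x ≠ 0 := by nlinarith
  have e1 := (hasDerivAt_id x).fun_div (((hasDerivAt_id x).const_mul (G - 1)).const_add 1) d1
  have e2 := ((hasDerivAt_id x).const_mul 3).fun_div
    (((hasDerivAt_id x).const_mul (G + 1)).const_add 1) d2
  have := e1.add e2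
  simp only [id] at this
  unfold W
  refine this.congr_deriv ?_
  field_simp
  ring

lemma w_ge {x : ℝ} (h0 : 0 ≤ x) :
    ((1 + 2.61804 * x) ^ 2 + 3 * (1 + 0.61804 * x) ^ 2) / ((1 + 0.61804 * x) ^ 2 * (1 + 2.61804 * x) ^ 2)
      ≤ 1 / (1 + (G - 1) * x) ^ 2 + 3 / (1 + (G + 1) * x) ^ 2 := by
  have hG := G_lo
  have hG' := G_hi
  have : ((1 + 2.61804 * x) ^ 2 + 3 * (1 + 0.61804 * x) ^ 2) / ((1 + 0.61804 * x) ^ 2 * (1 + 2.61804 * x) ^ 2) =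
      1 / (1 + 0.61804 * x) ^ 2 + 3 / (1 + 2.61804 * x) ^ 2 := by
    have : 1 + 0.61804 * x ≠ 0 := by positivity
    have : 1 + 2.61804 * x ≠ 0 := by positivity
    field_simp
  rw [this]
  have d1 : 0 < 1 + (G - 1) * x := by nlinarith
  have d2 : 0 < 1 + (G + 1) * x := by nlinarith
  have f1 : 1 + (G - 1) * x ≤ 1 + 0.61804 * x := by nlinarith
  have f2 : 1 + (G + 1) * x ≤ 1 + 2.61804 * x := by nlinarith
  gcongr

lemma JJ_anti {x y : ℝ} (h0 : 0 ≤ x) (hxy : x ≤ y) (h1 : y ≤ 1) : JJ y ≤ JJ x := by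
  have hG := G_lo
  set F : ℝ → ℝ := fun x => 2 * G * (1 - (2 * G + 1) / ((3 * G + 2) - (1 - x) ^ 2)) +
    (0.0437 * x + 0.065 / 2 * x ^ 2 + 0.0847 / 3 * x ^ 3) - 0.37 * W x with hF
  have hJ : ∀ z, 0 ≤ z → z ≤ 1 → JJ z = F z := by
    intro z z0 z1
    simp only [hF, JJ, BB_eq z0 z1]
  rw [hJ x h0 (hxy.trans h1), hJ y (h0.trans hxy) h1]
  have hd : ∀ z, 0 ≤ z → z ≤ 1 → HasDerivAt F
      (2 * G * ((2 * G + 1) * (2 * (1 - z)) / ((3 * G + 2) - (1 - z) ^ 2) ^ 2) +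
      (0.0437 + 0.065 * z + 0.0847 * z ^ 2) -
      0.37 * (1 / (1 + (G - 1) * z) ^ 2 + 3 / (1 + (G + 1) * z) ^ 2)) z := by
    intro z z0 z1
    have p : HasDerivAt (fun x : ℝ => 0.0437 * x + 0.065 / 2 * x ^ 2 + 0.0847 / 3 * x ^ 3)
        (0.0437 + 0.065 * z + 0.0847 * z ^ 2) z := by
      have := (((hasDerivAt_id z).const_mul 0.0437).add
        (((hasDerivAt_id z).pow 2).const_mul (0.065 / 2))).add
        (((hasDerivAt_id z).pow 3).const_mul (0.0847 / 3))
      refine this.congr_deriv ?_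
      norm_num
      ring
    exact ((b_deriv z0 z1).add p).sub ((W_deriv z0).const_mul 0.37)
  have hanti : AntitoneOn F (Icc 0 1) := by
    apply antitoneOn_of_deriv_nonpos (convex_Icc 0 1)
    · intro z hz
      exact (hd z hz.1 hz.2).continuousAt.continuousWithinAt
    · intro z hz
      rw [interior_Icc] at hz
      exact (hd z hz.1.le hz.2.le).differentiableAt.differentiableWithinAt
    · intro z hz
      rw [interior_Icc] at hz
      rw [(hd z hz.1.le hz.2.le).deriv]
      have hz0 := hz.1.le
      have k1 := b_le hz.1.le hz.2.le
      have k2 := w_ge hz.1.le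
      have k3 := poly_w hz.1.le (by linarith [hz.2] : 0 ≤ 1 - z)
      have hpos : 0 < (1 + 0.61804 * z) ^ 2 * (1 + 2.61804 * z) ^ 2 := by positivity
      rw [← le_div_iff₀ hpos, mul_div_assoc] at k3
      linarith
  exact hanti ⟨h0, hxy.trans h1⟩ ⟨h0.trans hxy, h1⟩ hxy

lemma subdiv (k : ℝ → ℝ) (K : ℝ)
    (hk : ∀ x y, 0 ≤ x → x ≤ y → y ≤ 1 → k y - k x ≤ K * (y - x) ^ 2) {x y : ℝ}
    (h0 : 0 ≤ x) (hxy : x ≤ y) (h1 : y ≤ 1) : k y ≤ k x := by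
  have key : ∀ n : ℕ, k y - k x ≤ K * (y - x) ^ 2 / ((n : ℝ) + 1) := by
    intro n
    set δ := (y - x) / ((n : ℝ) + 1) with hδ
    have hn : (0 : ℝ) < (n : ℝ) + 1 := by positivity
    have hδ0 : 0 ≤ δ := div_nonneg (by linarith) hn.le
    have hδn : ((n : ℝ) + 1) * δ = y - x := by rw [hδ]; field_simp
    have ind : ∀ j : ℕ, j ≤ n + 1 → k (x + j * δ) - k x ≤ j * (K * δ ^ 2) := by
      intro j
      induction j with
      | zero => intro _; simp
      | succ j ih =>
        intro hj
        have i1 := ih (by omega)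
        have hjn : ((j : ℝ) + 1) ≤ (n : ℝ) + 1 := by exact_mod_cast hj
        have hj0 : (0 : ℝ) ≤ j := Nat.cast_nonneg j
        have i2 := hk (x + j * δ) (x + ((j + 1 : ℕ) : ℝ) * δ) (by positivity)
          (by push_cast; nlinarith) (by push_cast; nlinarith)
        have e : x + ((j + 1 : ℕ) : ℝ) * δ - (x + j * δ) = δ := by push_cast; ring
        rw [e] at i2
        push_cast at i2 ⊢
        linarith
    have := ind (n + 1) le_rfl
    push_cast at this
    rw [hδn, show x + (y - x) = y by ring] at this
    refine this.trans (le_of_eq ?_)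
    rw [hδ]
    field_simp
  have hlim : Tendsto (fun n : ℕ => K * (y - x) ^ 2 / ((n : ℝ) + 1)) atTop (nhds 0) := by
    apply Tendsto.div_atTop tendsto_const_nhds
    exact tendsto_atTop_add_const_right _ _ tendsto_natCast_atTop_atTop
  have := ge_of_tendsto' hlim key
  linarith

end OCF

namespace OCF

lemma W_mono : MonotoneOn W (Icc 0 1) := by
  have hG := G_lo
  apply monotoneOn_of_deriv_nonneg (convex_Icc 0 1)
  · intro z hz
    exact (W_deriv hz.1).continuousAt.continuousWithinAt
  · intro z hz
    rw [interior_Icc] at hz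
    exact (W_deriv hz.1.le).differentiableAt.differentiableWithinAt
  · intro z hz
    rw [interior_Icc] at hz
    rw [(W_deriv hz.1.le).deriv]
    positivity

/-- `h` is `M`-Lipschitz for the metric defined by `W`. -/
def LipW (h : ℝ → ℝ) (M : ℝ) : Prop :=
  ∀ s t, 0 ≤ s → s ≤ t → t ≤ 1 → |h t - h s| ≤ M * (W t - W s)

lemma W_zero : W 0 = 0 := by simp [W]

lemma W_nonneg {t : ℝ} (ht : t ∈ Icc (0 : ℝ) 1) : 0 ≤ W t := by
  have := W_mono (left_mem_Icc.2 zero_le_one) ht ht.1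
  rwa [W_zero] at this

lemma W_bdd {t : ℝ} (ht : t ∈ Icc (0 : ℝ) 1) : |W t| ≤ W 1 := by
  rw [abs_of_nonneg (W_nonneg ht)]
  exact W_mono ht (right_mem_Icc.2 zero_le_one) ht.2

lemma LipW.bdd {h : ℝ → ℝ} {M : ℝ} (hh : LipW h M) (hM : 0 ≤ M) {t : ℝ} (ht : t ∈ Icc (0 : ℝ) 1) :
    |h t| ≤ |h 0| + M * W 1 := by
  have h1 := hh 0 t le_rfl ht.1 ht.2
  have h2 := (le_abs_self _).trans (W_bdd ht)
  rw [W_zero, sub_zero] at h1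
  have h3 : M * W t ≤ M * W 1 := mul_le_mul_of_nonneg_left h2 hM
  have := abs_sub_abs_le_abs_sub (h t) (h 0)
  linarith

lemma U_diff {h : ℝ → ℝ} {M : ℝ} (hM : 0 ≤ M) (hh : LipW h M) {x y : ℝ}
    (h0 : 0 ≤ x) (hxy : x ≤ y) (h1 : y ≤ 1) :
    U h y - U h x ≤ M * (BB y - BB x + (y - x) * QQ y) := by
  have hy0 : 0 ≤ y := h0.trans hxy
  have hx1 : x ≤ 1 := hxy.trans h1
  have hb : ∀ t ∈ Icc (0 : ℝ) 1, |h t| ≤ |h 0| + M * W 1 := fun t ht => hh.bdd hM ht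
  have sy := (UT_summable h _ hb hy0 h1).hasSum
  have sx := (UT_summable h _ hb h0 hx1).hasSum
  have swx := UW_hasSum h0 hx1
  have swy := UW_hasSum hy0 h1
  obtain ⟨sE, sEle⟩ := qV1_hasSum h1
  set φ : ℝ → ℝ := fun t => h t + M * W t with hφ
  have φmono : MonotoneOn φ (Icc 0 1) := by
    intro s hs t ht hst
    have := (abs_le.1 (hh s t hs.1 hst ht.2)).1
    simp only [hφ]
    linarith
  have φb : ∀ t ∈ Icc (0 : ℝ) 1, |φ t| ≤ |h 0| + M * W 1 + M * W 1 := by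
    intro t ht
    have a := hb t ht
    have b := W_bdd ht
    refine (abs_add_le _ _).trans ?_
    rw [abs_mul, abs_of_nonneg hM]
    have := mul_le_mul_of_nonneg_left b hM
    linarith
  have c1 := (sum_p hy0 (fun m => φ (1 / (2 * (m : ℝ) + 1 + y))) _ (fun m => φb _ (al_mem m hy0)) h1)
  have c2 := (sum_p h0 (fun m => φ (1 / (2 * (m : ℝ) + 1 + y))) _ (fun m => φb _ (al_mem m hy0)) hx1)
  have c3 := (sum_r hy0 (fun m => φ (1 / (2 * (m : ℝ) + 3 - y))) _ (fun m => φb _ (be_mem m h1)) h1)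
  have c4 := (sum_r h0 (fun m => φ (1 / (2 * (m : ℝ) + 3 - y))) _ (fun m => φb _ (be_mem m h1)) hx1)
  have c5 : Summable (fun m : ℕ =>
      ((PP y * q (2 * (m : ℝ) + 1 + y) - PP x * q (2 * (m : ℝ) + 1 + x)) *
        φ (1 / (2 * (m : ℝ) + 1 + y)) +
      (PP y * q (2 * (m : ℝ) + 3 - y) - PP x * q (2 * (m : ℝ) + 3 - x)) *
        φ (1 / (2 * (m : ℝ) + 3 - y)))) := by
    refine ((c1.sub c2).add (c3.sub c4)).congr ?_
    intro m; ring
  have hS := dom φ φmono h0 hxy h1 _ c5.hasSum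
  have tot := (((swx.sub swy).add (sE.hasSum.mul_left (2 * (y - x) * PP y))).mul_left M).add c5.hasSum
  have hle := hasSum_le ?_ (sy.sub sx) tot
  · refine hle.trans ?_
    have e1 : 2 * (y - x) * PP y * ∑' m : ℕ, q (2 * (m : ℝ) + 3 - y) * V1 (2 * (m : ℝ) + 3 - y) ≤
        (y - x) * QQ y := by
      have := ee_le hy0 h1
      have p := (PP_pos hy0 h1).le
      have : 2 * PP y * ∑' m : ℕ, q (2 * (m : ℝ) + 3 - y) * V1 (2 * (m : ℝ) + 3 - y) ≤ QQ y :=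
        (mul_le_mul_of_nonneg_left sEle (by linarith)).trans this
      have := mul_le_mul_of_nonneg_left this (by linarith : 0 ≤ y - x)
      linarith
    have e2 : M * (2 - BB x - (2 - BB y) +
        2 * (y - x) * PP y * ∑' m : ℕ, q (2 * (m : ℝ) + 3 - y) * V1 (2 * (m : ℝ) + 3 - y)) ≤
        M * (BB y - BB x + (y - x) * QQ y) := by
      apply mul_le_mul_of_nonneg_left _ hM
      linarith
    linarith
  · intro m
    have hm : (0 : ℝ) ≤ m := Nat.cast_nonneg m
    have pp := p_nonneg m h0 hx1
    have rp := r_nonneg m h0 hx1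
    have hal : 1 / (2 * (m : ℝ) + 1 + y) ≤ 1 / (2 * (m : ℝ) + 1 + x) := by
      apply one_div_le_one_div_of_le <;> linarith
    have hbe : 1 / (2 * (m : ℝ) + 3 - x) ≤ 1 / (2 * (m : ℝ) + 3 - y) := by
      apply one_div_le_one_div_of_le <;> linarith
    have d1 := (abs_le.1 (hh _ _ (al_mem m hy0).1 hal (al_mem m h0).2)).1
    have d2 := (abs_le.1 (hh _ _ (be_mem m hx1).1 hbe (be_mem m h1).2)).2
    have d3 : PP x * q (2 * (m : ℝ) + 3 - x) *
        (W (1 / (2 * (m : ℝ) + 3 - y)) - W (1 / (2 * (m : ℝ) + 3 - x))) ≤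
        (y - x) * PP y * (q (2 * (m : ℝ) + 3 - y) * V1 (2 * (m : ℝ) + 3 - y)) := by
      rw [W_inv (by linarith), W_inv (by linarith)]
      have a := V_diff (v := 2 * (m : ℝ) + 3 - y) (u := 2 * (m : ℝ) + 3 - x) (by linarith) (by linarith)
      rw [show 2 * (m : ℝ) + 3 - x - (2 * (m : ℝ) + 3 - y) = y - x by ring] at a
      have b : PP x * q (2 * (m : ℝ) + 3 - x) ≤ PP y * q (2 * (m : ℝ) + 3 - y) :=
        mul_le_mul (PP_mono hxy h1) (q_anti (by linarith) (by linarith)) (q_nonneg (by linarith))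
          (PP_pos hy0 h1).le
      have c : 0 ≤ (y - x) * V1 (2 * (m : ℝ) + 3 - y) := mul_nonneg (by linarith) (V1_nonneg _)
      calc _ ≤ PP x * q (2 * (m : ℝ) + 3 - x) * ((y - x) * V1 (2 * (m : ℝ) + 3 - y)) :=
            mul_le_mul_of_nonneg_left a rp
        _ ≤ PP y * q (2 * (m : ℝ) + 3 - y) * ((y - x) * V1 (2 * (m : ℝ) + 3 - y)) :=
            mul_le_mul_of_nonneg_right b c
        _ = _ := by ring
    have d4 := mul_le_mul_of_nonneg_left d3 hM
    have d5 := mul_le_mul_of_nonneg_left d1 pp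
    have d6 := mul_le_mul_of_nonneg_left d2 rp
    simp only [UT, hφ]
    linarith

lemma U_contr {h : ℝ → ℝ} {M : ℝ} (hM : 0 ≤ M) (hh : LipW h M) : LipW (U h) (M * 0.37) := by
  have main : ∀ h : ℝ → ℝ, LipW h M → ∀ x y, 0 ≤ x → x ≤ y → y ≤ 1 →
      U h y - U h x ≤ M * 0.37 * (W y - W x) := by
    intro h hh x y h0 hxy h1
    have := subdiv (fun t => U h t - M * 0.37 * W t) M (by
      intro x y h0 hxy h1
      have a := U_diff hM hh h0 hxy h1
      have b := JJ_anti h0 hxy h1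
      unfold JJ at b
      have c : BB y - BB x + (y - x) * QQ y - 0.37 * (W y - W x) ≤ (y - x) ^ 2 := by
        have : (y - x) * QQ y - ((0.0437 * y + 0.065 / 2 * y ^ 2 + 0.0847 / 3 * y ^ 3) -
          (0.0437 * x + 0.065 / 2 * x ^ 2 + 0.0847 / 3 * x ^ 3)) =
          (y - x) ^ 2 * (0.065 / 2 + 0.0847 / 3 * (2 * y + x)) := by unfold QQ; ring
        have : (y - x) ^ 2 * (0.065 / 2 + 0.0847 / 3 * (2 * y + x)) ≤ (y - x) ^ 2 * 1 := by
          apply mul_le_mul_of_nonneg_left _ (sq_nonneg _)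
          linarith
        linarith
      have := mul_le_mul_of_nonneg_left c hM
      linarith) h0 hxy h1
    linarith
  intro s t h0 hst h1
  rw [abs_le]
  constructor
  · have := main (fun t => - h t) (fun s t h0 hst h1 => by
      have := hh s t h0 hst h1
      rw [← abs_neg] at this
      convert this using 2; ring) s t h0 hst h1
    have e : ∀ x, U (fun t => - h t) x = - U h x := by
      intro x
      unfold U
      rw [← tsum_neg]
      congr 1
      ext m
      unfold UT; ring
    rw [e, e] at this
    linarith
  · exact main h hh s t h0 hst h1

lemma LipW.continuousOn {h : ℝ → ℝ} {M : ℝ} (hh : LipW h M) : ContinuousOn h (Icc 0 1) := by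
  have key : ∀ s ∈ Icc (0 : ℝ) 1, ∀ t ∈ Icc (0 : ℝ) 1, |h t - h s| ≤ |M| * |W t - W s| := by
    intro s hs t ht
    rcases le_total s t with hst | hst
    · exact (hh s t hs.1 hst ht.2).trans (by rw [← abs_mul]; exact le_abs_self _)
    · have := hh t s ht.1 hst hs.2
      rw [abs_sub_comm (h t), abs_sub_comm (W t), ← abs_mul]
      exact this.trans (le_abs_self _)
  intro s hs
  have hW : Tendsto (fun t => |M| * |W t - W s|) (nhdsWithin s (Icc 0 1)) (nhds 0) := by
    have : ContinuousWithinAt W (Icc 0 1) s := (W_deriv hs.1).continuousAt.continuousWithinAt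
    have := ((this.sub (continuousWithinAt_const (b := W s))).abs).const_mul |M|
    simpa [ContinuousWithinAt] using this
  rw [ContinuousWithinAt, tendsto_iff_dist_tendsto_zero]
  refine squeeze_zero' (Eventually.of_forall fun _ => dist_nonneg) ?_ hW
  filter_upwards [self_mem_nhdsWithin] with t ht
  rw [Real.dist_eq]
  exact key s hs t ht

end OCF

namespace OCF

noncomputable def rho (x : ℝ) : ℝ := 1 / (x + G - 1) + 1 / (G + 1 - x)

lemma rho_pos {x : ℝ} (h0 : 0 ≤ x) (h1 : x ≤ 1) : 0 < rho x := by
  have hG := G_lo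
  have a : 0 < x + G - 1 := by linarith
  have b : 0 < G + 1 - x := by linarith
  unfold rho; positivity

lemma rho_cont : ContinuousOn rho (Icc 0 1) := by
  have hG := G_lo
  unfold rho
  apply ContinuousOn.add
  · apply ContinuousOn.div continuousOn_const (by fun_prop)
    intro x hx; linarith [hx.1]
  · apply ContinuousOn.div continuousOn_const (by fun_prop)
    intro x hx; linarith [hx.2]

lemma rho_inv {u : ℝ} (hu : 1 ≤ u) : rho (1 / u) * (1 / u ^ 2) = q u := by
  have hG := G_lo
  have hG2 := G_sq
  have h1 : u + G - 2 ≠ 0 := by linarith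
  have h2 : u + G ≠ 0 := by linarith
  have h3 : u ≠ 0 := by linarith
  have h5 : G ≠ 0 := by linarith
  have e1 : 1 / u + G - 1 = (u + G) / (G * u) := by
    field_simp; linear_combination u * hG2
  have e2 : G + 1 - 1 / u = G ^ 2 * (u + G - 2) / u := by
    field_simp
    linear_combination (2 - u) * hG2 - (G + 1) * hG2
  rw [q_eq hu, rho, e1, e2]
  field_simp
  linear_combination ((G + 1) * (u + G - 2) - 2 * u + 2) * hG2

lemma subst_one {h : ℝ → ℝ} (hc : ContinuousOn h (Icc 0 1)) (k e : ℝ) {x : ℝ}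
    (_he : e ^ 2 = 1) (h0 : 0 ≤ x) (hk : ∀ v ∈ Icc (0:ℝ) x, 1 ≤ k + e * v) :
    ∫ t in (1 / (k + e * x))..(1 / k), h t * rho t =
      ∫ v in (0:ℝ)..x, e * (q (k + e * v) * h (1 / (k + e * v))) := by
  have hcont : ContinuousOn (fun v : ℝ => k + e * v) (uIcc 0 x) := by fun_prop
  have key := intervalIntegral.integral_comp_mul_deriv'' (a := 0) (b := x)
    (f := fun v => 1 / (k + e * v)) (f' := fun v => - e / (k + e * v) ^ 2)
    (g := fun t => h t * rho t) ?_ ?_ ?_ ?_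
  · simp only [mul_zero, add_zero] at key
    rw [intervalIntegral.integral_symm, ← key, ← intervalIntegral.integral_neg]
    apply intervalIntegral.integral_congr
    intro v hv
    rw [uIcc_of_le h0] at hv
    simp only [Function.comp]
    rw [← rho_inv (hk v hv)]
    ring
  · apply ContinuousOn.div continuousOn_const hcont
    intro v hv
    rw [uIcc_of_le h0] at hv
    linarith [hk v hv]
  · intro v hv
    rw [min_eq_left h0, max_eq_right h0] at hv
    have hne : k + e * v ≠ 0 := by linarith [hk v ⟨hv.1.le, hv.2.le⟩]
    have d : HasDerivAt (fun v : ℝ => k + e * v) e v := by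
      simpa using ((hasDerivAt_id v).const_mul e).const_add k
    have := d.inv hne
    simp only [one_div]
    exact this.hasDerivWithinAt
  · apply ContinuousOn.div continuousOn_const (hcont.pow 2)
    intro v hv
    rw [uIcc_of_le h0] at hv
    have := hk v hv
    have : k + e * v ≠ 0 := by linarith
    exact pow_ne_zero 2 this
  · apply (hc.mul rho_cont).mono
    rintro _ ⟨v, hv, rfl⟩
    rw [uIcc_of_le h0] at hv
    have := hk v hv
    refine ⟨div_nonneg zero_le_one (zero_le_one.trans this), ?_⟩
    simp only
    rw [div_le_one (by linarith)]
    exact this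

lemma q_cont : ContinuousOn q (Ici 1) := by
  have hG := G_lo
  unfold q
  apply ContinuousOn.sub
  · apply ContinuousOn.div continuousOn_const (by fun_prop)
    intro x hx; have : 1 ≤ x := hx; linarith
  · apply ContinuousOn.div continuousOn_const (by fun_prop)
    intro x hx; have : 1 ≤ x := hx; linarith

lemma qh_cont {h : ℝ → ℝ} (hc : ContinuousOn h (Icc 0 1)) (k e : ℝ) {x : ℝ}
    (hk : ∀ v ∈ Icc (0:ℝ) x, 1 ≤ k + e * v) :
    ContinuousOn (fun v => q (k + e * v) * h (1 / (k + e * v))) (Icc 0 x) := by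
  have hcont : ContinuousOn (fun v : ℝ => k + e * v) (Icc 0 x) := by fun_prop
  apply ContinuousOn.mul
  · exact q_cont.comp hcont hk
  · apply hc.comp
    · apply ContinuousOn.div continuousOn_const hcont
      intro v hv
      linarith [hk v hv]
    · intro v hv
      have := hk v hv
      refine ⟨by positivity, ?_⟩
      rw [div_le_one (by linarith)]
      exact this

noncomputable def QT (h : ℝ → ℝ) (v : ℝ) (m : ℕ) : ℝ :=
  q (2 * (m : ℝ) + 1 + v) * h (1 / (2 * (m : ℝ) + 1 + v)) +
    q (2 * (m : ℝ) + 3 - v) * h (1 / (2 * (m : ℝ) + 3 - v))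

lemma QT_integral {h : ℝ → ℝ} (hc : ContinuousOn h (Icc 0 1)) (m : ℕ) {x : ℝ}
    (h0 : 0 ≤ x) (h1 : x ≤ 1) :
    (∫ t in (1 / (2 * (m : ℝ) + 1 + x))..(1 / (2 * (m : ℝ) + 1)), h t * rho t) +
    (∫ t in (1 / (2 * (m : ℝ) + 3))..(1 / (2 * (m : ℝ) + 3 - x)), h t * rho t) =
      ∫ v in (0:ℝ)..x, QT h v m := by
  have hm : (0:ℝ) ≤ m := Nat.cast_nonneg m
  have k1 : ∀ v ∈ Icc (0:ℝ) x, 1 ≤ 2 * (m : ℝ) + 1 + 1 * v := fun v hv => by linarith [hv.1]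
  have k2 : ∀ v ∈ Icc (0:ℝ) x, 1 ≤ 2 * (m : ℝ) + 3 + (-1) * v := fun v hv => by linarith [hv.2]
  have a := subst_one hc (2 * (m : ℝ) + 1) 1 (by norm_num) h0 k1
  have b := subst_one hc (2 * (m : ℝ) + 3) (-1) (by norm_num) h0 k2
  rw [intervalIntegral.integral_symm] at b
  have c1 := (qh_cont hc _ _ k1)
  have c2 := (qh_cont hc _ _ k2)
  have i1 := (c1.intervalIntegrable_of_Icc (μ := volume) h0)
  have i2 := (c2.intervalIntegrable_of_Icc (μ := volume) h0)
  unfold QT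
  simp only [one_mul, neg_mul, intervalIntegral.integral_neg, neg_inj, ← sub_eq_add_neg] at a b i1 i2
  rw [intervalIntegral.integral_add i1 i2, a, b]

lemma QT_hasSum {h : ℝ → ℝ} {C : ℝ} (hC : ∀ t ∈ Icc (0 : ℝ) 1, |h t| ≤ C) {x : ℝ}
    (h0 : 0 ≤ x) (h1 : x ≤ 1) : HasSum (QT h x) (U h x * rho x) := by
  have := (UT_summable h C hC h0 h1).hasSum.mul_right (rho x)
  have e : (fun m => UT h x m * rho x) = QT h x := by
    ext m
    have := PP_rho h0 h1
    unfold UT QT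
    rw [← rho] at this
    linear_combination (q (2 * (m : ℝ) + 1 + x) * h (1 / (2 * (m : ℝ) + 1 + x)) +
    q (2 * (m : ℝ) + 3 - x) * h (1 / (2 * (m : ℝ) + 3 - x))) * this
  rw [e] at this
  exact this

lemma QT_int_hasSum {h : ℝ → ℝ} {C : ℝ} (hc : ContinuousOn h (Icc 0 1))
    (hC : ∀ t ∈ Icc (0 : ℝ) 1, |h t| ≤ C) {x : ℝ}
    (h0 : 0 ≤ x) (h1 : x ≤ 1) :
    HasSum (fun m => ∫ v in (0:ℝ)..x, QT h v m) (∫ v in (0:ℝ)..x, U h v * rho v) := by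
  have hs : Summable (fun m : ℕ => 2 * C * q (2 * (m : ℝ) + 1 + 0)) :=
    (hasSum_q1 le_rfl).summable.mul_left _
  have C0 : 0 ≤ C := (abs_nonneg _).trans (hC 0 ⟨le_rfl, zero_le_one⟩)
  apply intervalIntegral.hasSum_integral_of_dominated_convergence
    (ι := ℕ) (F := fun m v => QT h v m) (fun m _ => 2 * C * q (2 * (m : ℝ) + 1 + 0))
  · intro m
    have hm : (0:ℝ) ≤ m := Nat.cast_nonneg m
    have k1 : ∀ v ∈ Icc (0:ℝ) x, 1 ≤ 2 * (m : ℝ) + 1 + 1 * v := fun v hv => by linarith [hv.1]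
    have k2 : ∀ v ∈ Icc (0:ℝ) x, 1 ≤ 2 * (m : ℝ) + 3 + (-1) * v := fun v hv => by linarith [hv.2]
    have c := (qh_cont hc _ _ k1).add (qh_cont hc _ _ k2)
    have c' : ContinuousOn (fun v => QT h v m) (Icc 0 x) := by
      refine c.congr ?_
      intro v hv
      simp only [QT, one_mul, neg_mul, ← sub_eq_add_neg, Pi.add_apply]
    rw [uIoc_of_le h0]
    exact (c'.mono Ioc_subset_Icc_self).aestronglyMeasurable measurableSet_Ioc
  · intro m
    refine Eventually.of_forall fun v hv => ?_
    rw [uIoc_of_le h0] at hv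
    have hm : (0:ℝ) ≤ m := Nat.cast_nonneg m
    have v0 := hv.1.le
    have v1 := hv.2.trans h1
    have a1 := hC _ (al_mem m v0)
    have a2 := hC _ (be_mem m v1)
    have b1 : q (2 * (m : ℝ) + 1 + v) ≤ q (2 * (m : ℝ) + 1 + 0) :=
      q_anti (by linarith) (by linarith)
    have b2 : q (2 * (m : ℝ) + 3 - v) ≤ q (2 * (m : ℝ) + 1 + 0) :=
      q_anti (by linarith) (by linarith)
    have d1 : 0 ≤ q (2 * (m : ℝ) + 1 + v) := q_nonneg (by linarith)
    have d2 : 0 ≤ q (2 * (m : ℝ) + 3 - v) := q_nonneg (by linarith)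
    rw [Real.norm_eq_abs]
    unfold QT
    refine (abs_add_le _ _).trans ?_
    rw [abs_mul, abs_mul, abs_of_nonneg d1, abs_of_nonneg d2]
    have f1 := mul_le_mul b1 a1 (abs_nonneg _) (d1.trans b1)
    have f2 := mul_le_mul b2 a2 (abs_nonneg _) (d1.trans b1)
    linarith
  · exact Eventually.of_forall fun v hv => hs
  · exact intervalIntegrable_const
  · refine Eventually.of_forall fun v hv => ?_
    rw [uIoc_of_le h0] at hv
    exact QT_hasSum hC hv.1.le (hv.2.trans h1)

end OCF

namespace OCF

lemma T_mem (z : ℝ) : T z ∈ Icc (0:ℝ) 1 := by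
  have a := Int.fract_nonneg (1 / z)
  have b := (Int.fract_lt_one (1 / z)).le
  unfold T
  split_ifs
  · simp
  · exact ⟨a, b⟩
  · exact ⟨by linarith, by linarith⟩

lemma T_meas : Measurable T := by
  have m1 : Measurable (fun x : ℝ => 1 / x) := measurable_const.div measurable_id
  have m2 : Measurable (fun x : ℝ => Int.fract (1 / x)) := measurable_fract.comp m1
  have m3 : MeasurableSet {x : ℝ | Odd ⌊1 / x⌋} :=
    (Int.measurable_floor.comp m1) (MeasurableSet.of_discrete (s := {k : ℤ | Odd k}))
  unfold T
  refine Measurable.ite (measurableSet_singleton 0) measurable_const ?_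
  exact Measurable.ite m3 m2 (measurable_const.sub m2)

lemma T_eq_cases {z : ℝ} (hz : z ≠ 0) :
    (Odd ⌊1 / z⌋ ∧ 1 / z = ⌊1 / z⌋ + T z) ∨
    (¬ Odd ⌊1 / z⌋ ∧ 1 / z = 1 + ⌊1 / z⌋ - T z) := by
  have := Int.floor_add_fract (1 / z)
  unfold T
  rw [if_neg hz]
  split_ifs with h
  · left; exact ⟨h, this.symm⟩
  · right; exact ⟨h, by linarith⟩

lemma T_irr {z : ℝ} (hz : Irrational z) : Irrational (T z) := by
  have h0 : z ≠ 0 := hz.ne_zero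
  have h1 : Irrational (1 / z) := by rw [one_div]; exact hz.inv
  rcases T_eq_cases h0 with ⟨_, h⟩ | ⟨_, h⟩
  · have : T z = 1 / z - (⌊1 / z⌋ : ℤ) := by linarith
    rw [this]; exact h1.sub_intCast _
  · have : T z = ((1 + ⌊1 / z⌋ : ℤ) : ℝ) - 1 / z := by push_cast; linarith
    rw [this]; exact h1.intCast_sub _

lemma T_iter_irr {z : ℝ} (hz : Irrational z) (n : ℕ) : Irrational (T^[n] z) := by
  induction n with
  | zero => exact hz
  | succ n ih => rw [Function.iterate_succ_apply']; exact T_irr ih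

lemma inv_r {y : ℝ} (hy : Irrational y) (n : ℕ) : 1 / r y (n + 1) = T^[n] y := by
  have h0 : T^[n] y ≠ 0 := (T_iter_irr hy n).ne_zero
  have : r y (n + 1) = 1 / T^[n] y := by
    have ea : a y (n + 1) = if Odd ⌊1 / (T^[n] y)⌋ then ⌊1 / (T^[n] y)⌋
      else 1 + ⌊1 / (T^[n] y)⌋ := rfl
    have ee : eps y (n + 1) = if Odd ⌊1 / (T^[n] y)⌋ then 1 else -1 := rfl
    unfold r
    rw [ea, ee, Function.iterate_succ_apply']
    rcases T_eq_cases h0 with ⟨o, h⟩ | ⟨o, h⟩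
    · rw [if_pos o, if_pos o]; push_cast; linarith
    · rw [if_neg o, if_neg o]
      push_cast
      linarith
  rw [this, one_div_one_div]

lemma T_fiber (c : ℝ) : (T ⁻¹' {c}).Countable := by
  have : T ⁻¹' {c} ⊆ {0} ∪ (range (fun k : ℤ => 1 / ((k:ℝ) + c)) ∪
      range (fun k : ℤ => 1 / (1 + (k:ℝ) - c))) := by
    intro z hz
    by_cases h0 : z = 0
    · left; exact h0
    · right
      have hz : T z = c := hz
      rcases T_eq_cases h0 with ⟨_, h⟩ | ⟨_, h⟩
      · left
        refine ⟨⌊1 / z⌋, ?_⟩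
        simp only
        rw [← hz, ← h, one_div_one_div]
      · right
        refine ⟨⌊1 / z⌋, ?_⟩
        simp only
        rw [← hz, ← h, one_div_one_div]
  exact ((countable_singleton 0).union ((countable_range _).union (countable_range _))).mono this

lemma map_null {ν : Measure ℝ} [NullSingletonClass ν] : NullSingletonClass (ν.map T) where
  measure_singleton c := by
    rw [Measure.map_apply T_meas (measurableSet_singleton c)]
    exact (T_fiber c).measure_zero ν

lemma map_supp {ν : Measure ℝ} : (ν.map T) (Icc (0:ℝ) 1)ᶜ = 0 := by
  rw [Measure.map_apply T_meas measurableSet_Icc.compl]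
  have : T ⁻¹' (Icc (0:ℝ) 1)ᶜ = ∅ := by
    ext z; simpa using T_mem z
  rw [this, measure_empty]

lemma floor_idx {z : ℝ} (hz : z ∈ Ioc (0:ℝ) 1) :
    ∃ m : ℕ, ⌊1 / z⌋ = 2 * (m:ℤ) + 1 ∨ ⌊1 / z⌋ = 2 * (m:ℤ) + 2 := by
  have : 1 ≤ ⌊1 / z⌋ := by
    rw [Int.le_floor]; push_cast
    rw [le_div_iff₀ hz.1]; linarith [hz.2]
  refine ⟨((⌊1 / z⌋ - 1) / 2).toNat, ?_⟩
  omega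

def EE (x : ℝ) (m : ℕ) : Set ℝ :=
  Ioc (1 / (2 * (m:ℝ) + 1 + x)) (1 / (2 * (m:ℝ) + 1)) ∪
    Ioo (1 / (2 * (m:ℝ) + 3)) (1 / (2 * (m:ℝ) + 3 - x))

lemma EE_iff {x z : ℝ} {m : ℕ} (h0 : 0 ≤ x) (h1 : x ≤ 1) :
    z ∈ EE x m ↔ z ∈ Ioc (0:ℝ) 1 ∧ T z < x ∧
      (⌊1 / z⌋ = 2 * (m:ℤ) + 1 ∨ ⌊1 / z⌋ = 2 * (m:ℤ) + 2) := by
  have hm : (0:ℝ) ≤ m := Nat.cast_nonneg m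
  constructor
  · rintro (⟨a, b⟩ | ⟨a, b⟩)
    · have hz : 0 < z := lt_of_le_of_lt (by positivity) a
      have a' : 1 / z < 2 * (m:ℝ) + 1 + x := by
        rw [div_lt_iff₀ (by positivity)] at a
        rw [div_lt_iff₀ hz]; linarith
      have b' : 2 * (m:ℝ) + 1 ≤ 1 / z := by
        rw [le_div_iff₀ (by positivity)] at b
        rw [le_div_iff₀ hz]; linarith
      have fl : ⌊1 / z⌋ = 2 * (m:ℤ) + 1 := by
        rw [Int.floor_eq_iff]; push_cast; constructor <;> linarith
      refine ⟨⟨hz, b.trans ?_⟩, ?_, Or.inl fl⟩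
      · rw [div_le_one (by positivity)]; linarith
      · rcases T_eq_cases hz.ne' with ⟨o, h⟩ | ⟨o, h⟩
        · rw [fl] at h; push_cast at h; linarith
        · exact absurd ⟨m, fl⟩ o
    · have hz : 0 < z := lt_of_le_of_lt (by positivity) a
      have p : 0 < 2 * (m:ℝ) + 3 - x := by linarith
      have a' : 1 / z < 2 * (m:ℝ) + 3 := by
        rw [div_lt_iff₀ (by positivity)] at a
        rw [div_lt_iff₀ hz]; linarith
      have b' : 2 * (m:ℝ) + 3 - x < 1 / z := by
        rw [lt_div_iff₀ p] at b
        rw [lt_div_iff₀ hz]; linarith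
      have fl : ⌊1 / z⌋ = 2 * (m:ℤ) + 2 := by
        rw [Int.floor_eq_iff]; push_cast; constructor <;> linarith
      refine ⟨⟨hz, b.le.trans ?_⟩, ?_, Or.inr fl⟩
      · rw [div_le_one p]; linarith
      · rcases T_eq_cases hz.ne' with ⟨o, h⟩ | ⟨o, h⟩
        · rw [fl] at o
          exact absurd o (by rw [Int.not_odd_iff_even]; exact ⟨m + 1, by ring⟩)
        · rw [fl] at h; push_cast at h; linarith
  · rintro ⟨⟨hz, hz1⟩, hT, fl | fl⟩
    · left
      rcases T_eq_cases hz.ne' with ⟨o, h⟩ | ⟨o, h⟩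
      · rw [fl] at h; push_cast at h
        have hT0 := (T_mem z).1
        have e : z = 1 / (2 * (m:ℝ) + 1 + T z) := by rw [← h, one_div_one_div]
        constructor
        · rw [e]; exact one_div_lt_one_div_of_lt (by positivity) (by linarith)
        · rw [e]; exact one_div_le_one_div_of_le (by positivity) (by linarith)
      · exact absurd ⟨m, fl⟩ o
    · right
      rcases T_eq_cases hz.ne' with ⟨o, h⟩ | ⟨o, h⟩
      · rw [fl] at o
        exact absurd o (by rw [Int.not_odd_iff_even]; exact ⟨m + 1, by ring⟩)
      · have lt := Int.lt_floor_add_one (1 / z)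
        rw [fl] at h lt; push_cast at h lt
        have e : z = 1 / (2 * (m:ℝ) + 3 - T z) := by
          rw [show 2 * (m:ℝ) + 3 - T z = 1 / z by linarith, one_div_one_div]
        constructor
        · have := one_div_lt_one_div_of_lt (a := 1 / z) (b := 2 * (m:ℝ) + 3) (by positivity) (by linarith)
          rwa [one_div_one_div] at this
        · have := one_div_lt_one_div_of_lt (a := 2 * (m:ℝ) + 3 - x) (b := 1 / z) (by linarith) (by linarith)
          rwa [one_div_one_div] at this

lemma EE_meas (x : ℝ) (m : ℕ) : MeasurableSet (EE x m) := measurableSet_Ioc.union measurableSet_Ioo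

lemma EE_disj {x : ℝ} (h0 : 0 ≤ x) (h1 : x ≤ 1) : Pairwise (Function.onFun Disjoint (EE x)) := by
  intro i j hij
  rw [Function.onFun, Set.disjoint_left]
  intro z hi hj
  have a := ((EE_iff h0 h1).1 hi).2.2
  have b := ((EE_iff h0 h1).1 hj).2.2
  omega

lemma EE_union {x : ℝ} (h0 : 0 ≤ x) (h1 : x ≤ 1) : ⋃ m, EE x m = T ⁻¹' (Iio x) ∩ Ioc 0 1 := by
  ext z
  rw [mem_iUnion]
  constructor
  · rintro ⟨m, hm⟩
    have := (EE_iff h0 h1).1 hm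
    exact ⟨this.2.1, this.1⟩
  · rintro ⟨a, b⟩
    obtain ⟨m, hm⟩ := floor_idx b
    exact ⟨m, (EE_iff h0 h1).2 ⟨b, a, hm⟩⟩

/-- The distribution function of `ν` on `[0,1]` has density `h * rho`. -/
def Dens (ν : Measure ℝ) (h : ℝ → ℝ) : Prop :=
  ∀ x, 0 ≤ x → x ≤ 1 → ν.real (Iio x) = ∫ t in (0:ℝ)..x, h t * rho t

lemma Dens.sub {ν : Measure ℝ} [IsFiniteMeasure ν] [NullSingletonClass ν] {h : ℝ → ℝ}
    (hc : ContinuousOn h (Icc 0 1)) (hd : Dens ν h) {s t : ℝ} (h0 : 0 ≤ s) (hst : s ≤ t)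
    (h1 : t ≤ 1) : ν.real (Ico s t) = ∫ u in s..t, h u * rho u := by
  have c := hc.mul rho_cont
  have e : Ico s t = Iio t \ Iio s := by ext; simp
  rw [e, measureReal_sdiff (Iio_subset_Iio hst) measurableSet_Iio, hd t (h0.trans hst) h1,
    hd s h0 (hst.trans h1)]
  apply intervalIntegral.integral_interval_sub_left
  · exact (c.mono (Icc_subset_Icc le_rfl h1)).intervalIntegrable_of_Icc (h0.trans hst)
  · exact (c.mono (Icc_subset_Icc le_rfl (hst.trans h1))).intervalIntegrable_of_Icc h0

lemma EE_real {ν : Measure ℝ} [IsFiniteMeasure ν] [NullSingletonClass ν] {h : ℝ → ℝ}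
    (hc : ContinuousOn h (Icc 0 1)) (hd : Dens ν h) {x : ℝ} (h0 : 0 ≤ x) (h1 : x ≤ 1) (m : ℕ) :
    ν.real (EE x m) = ∫ v in (0:ℝ)..x, QT h v m := by
  have hm : (0:ℝ) ≤ m := Nat.cast_nonneg m
  rw [← QT_integral hc m h0 h1]
  have p : 0 < 2 * (m:ℝ) + 3 - x := by linarith
  unfold EE
  rw [measureReal_union ?_ measurableSet_Ioo, measureReal_congr (Ico_ae_eq_Ioc (μ := ν)).symm,
    measureReal_congr (Ioo_ae_eq_Ico (μ := ν)), hd.sub hc, hd.sub hc]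
  · positivity
  · exact one_div_le_one_div_of_le p (by linarith)
  · rw [div_le_one p]; linarith
  · positivity
  · exact one_div_le_one_div_of_le (by positivity) (by linarith)
  · rw [div_le_one (by positivity)]; linarith
  · rw [Set.disjoint_left]
    rintro z ⟨a, _⟩ ⟨_, b⟩
    have : 1 / (2 * (m:ℝ) + 3 - x) ≤ 1 / (2 * (m:ℝ) + 1 + x) :=
      one_div_le_one_div_of_le (by positivity) (by linarith)
    linarith

lemma Dens.step {ν : Measure ℝ} [IsFiniteMeasure ν] [NullSingletonClass ν] {h : ℝ → ℝ}
    (hs : ν (Icc (0:ℝ) 1)ᶜ = 0) {C : ℝ}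
    (hc : ContinuousOn h (Icc 0 1)) (hC : ∀ t ∈ Icc (0 : ℝ) 1, |h t| ≤ C) (hd : Dens ν h) :
    Dens (ν.map T) (U h) := by
  intro x h0 h1
  rw [map_measureReal_apply T_meas measurableSet_Iio]
  have ae : (T ⁻¹' (Iio x) : Set ℝ) =ᵐ[ν] (⋃ m, EE x m : Set ℝ) := by
    rw [EE_union h0 h1]
    have n1 : ∀ᵐ z ∂ν, z ∈ Icc (0:ℝ) 1 := by
      rw [ae_iff]; exact hs
    have n2 : ∀ᵐ z ∂ν, z ≠ 0 := by
      rw [ae_iff]; simp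
    filter_upwards [n1, n2] with z a b
    apply propext
    have : z ∈ Ioc (0:ℝ) 1 := ⟨lt_of_le_of_ne a.1 (Ne.symm b), a.2⟩
    exact ⟨fun h => ⟨h, this⟩, fun h => h.1⟩
  rw [measureReal_congr ae]
  have s1 := QT_int_hasSum hc hC h0 h1
  have s2 : ν.real (⋃ m, EE x m) = ∑' m, ν.real (EE x m) := by
    unfold Measure.real
    rw [measure_iUnion (EE_disj h0 h1) (EE_meas x), ENNReal.tsum_toReal_eq]
    intro m; exact measure_ne_top _ _
  rw [s2, ← s1.tsum_eq]
  exact tsum_congr fun m => EE_real hc hd h0 h1 m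

end OCF

namespace OCF

lemma W_lower {s t : ℝ} (h0 : 0 ≤ s) (hst : s ≤ t) (h1 : t ≤ 1) : t - s ≤ 4 * (W t - W s) := by
  have hG := G_lo
  have hG' := G_hi
  have := (convex_Icc (0:ℝ) 1).mul_sub_le_image_sub_of_le_deriv (f := W) (C := 1 / 4) ?_ ?_ ?_
    s ⟨h0, hst.trans h1⟩ t ⟨h0.trans hst, h1⟩ hst
  · linarith
  · intro z hz
    exact (W_deriv hz.1).continuousAt.continuousWithinAt
  · intro z hz
    rw [interior_Icc] at hz
    exact (W_deriv hz.1.le).differentiableAt.differentiableWithinAt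
  · intro z hz
    rw [interior_Icc] at hz
    rw [(W_deriv hz.1.le).deriv]
    have z0 := hz.1.le
    have z1 := hz.2.le
    have p : 0 < 1 + (G - 1) * z := by nlinarith
    have p2 : 1 + (G - 1) * z ≤ 2 := by nlinarith
    have : 1 / 4 ≤ 1 / (1 + (G - 1) * z) ^ 2 := by
      apply one_div_le_one_div_of_le (by positivity)
      nlinarith
    have : 0 ≤ 3 / (1 + (G + 1) * z) ^ 2 := by positivity
    linarith

lemma PP_contDiff : ContDiff ℝ 1 PP := by
  unfold PP; fun_prop

lemma base_lip {f : ℝ → ℝ} (hf : ContDiffOn ℝ 1 f (Icc 0 1)) : ∃ M, 0 ≤ M ∧ LipW f M := by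
  have ud := uniqueDiffOn_Icc (zero_lt_one (α := ℝ))
  have c : ContinuousOn (derivWithin f (Icc 0 1)) (Icc 0 1) :=
    hf.continuousOn_derivWithin ud le_rfl
  obtain ⟨K, hK⟩ := isCompact_Icc.exists_bound_of_continuousOn c
  have K0 : 0 ≤ K := (norm_nonneg _).trans (hK 0 ⟨le_rfl, zero_le_one⟩)
  refine ⟨K * 4, by positivity, ?_⟩
  intro s t h0 hst h1
  have := (convex_Icc (0:ℝ) 1).norm_image_sub_le_of_norm_derivWithin_le
    (hf.differentiableOn one_ne_zero) hK (x := s) (y := t) ⟨h0, hst.trans h1⟩ ⟨h0.trans hst, h1⟩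
  rw [Real.norm_eq_abs, Real.norm_eq_abs, abs_of_nonneg (sub_nonneg.2 hst)] at this
  have w := mul_le_mul_of_nonneg_left (W_lower h0 hst h1) K0
  linarith

noncomputable def nu (μ : Measure ℝ) : ℕ → Measure ℝ
  | 0 => μ
  | n + 1 => (nu μ n).map T

lemma T_iter_meas (n : ℕ) : Measurable T^[n] := T_meas.iterate n

lemma nu_eq (μ : Measure ℝ) (n : ℕ) : nu μ n = μ.map T^[n] := by
  induction n with
  | zero => simp [nu]
  | succ n ih =>
    rw [nu, ih, Measure.map_map T_meas (T_iter_meas n), Function.iterate_succ']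

lemma nu_props (μ : Measure ℝ) [IsProbabilityMeasure μ] [NullSingletonClass μ]
    (hμ : μ (Set.Icc (0 : ℝ) 1)ᶜ = 0) (n : ℕ) :
    IsProbabilityMeasure (nu μ n) ∧ NullSingletonClass (nu μ n) ∧
      (nu μ n) (Set.Icc (0 : ℝ) 1)ᶜ = 0 := by
  induction n with
  | zero => exact ⟨by assumption, by assumption, hμ⟩
  | succ n ih =>
    obtain ⟨a, b, c⟩ := ih
    exact ⟨Measure.isProbabilityMeasure_map T_meas.aemeasurable, map_null, map_supp⟩

lemma supp_real {ν : Measure ℝ} [IsProbabilityMeasure ν] [NullSingletonClass ν]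
    (hν : ν (Set.Icc (0 : ℝ) 1)ᶜ = 0) : ν.real (Iio 1) = 1 := by
  have : (Iio 1 : Set ℝ) =ᵐ[ν] (univ : Set ℝ) := by
    have n1 : ∀ᵐ z ∂ν, z ∈ Icc (0:ℝ) 1 := by
      rw [ae_iff]; exact hν
    have n2 : ∀ᵐ z ∂ν, z ≠ 1 := by
      rw [ae_iff]; simp
    filter_upwards [n1, n2] with z a b
    apply propext
    exact ⟨fun _ => trivial, fun _ => lt_of_le_of_ne a.2 b⟩
  rw [measureReal_congr this]
  simp

lemma H_eq (μ : Measure ℝ) [IsProbabilityMeasure μ] [NullSingletonClass μ]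
    (hμ : μ (Set.Icc (0 : ℝ) 1)ᶜ = 0) (n : ℕ) (x : ℝ) :
    H μ n x = (nu μ n).real (Iio x) := by
  have n1 : ∀ᵐ z ∂μ, z ∈ Icc (0:ℝ) 1 := by
    rw [ae_iff]; exact hμ
  cases n with
  | zero =>
    have n2 : ∀ᵐ z ∂μ, z ≠ x := by
      rw [ae_iff]; simp
    show μ.real (Icc 0 x) = μ.real (Iio x)
    apply measureReal_congr
    filter_upwards [n1, n2] with z a b
    apply propext
    exact ⟨fun h => lt_of_le_of_ne h.2 b, fun h => ⟨a.1, le_of_lt h⟩⟩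
  | succ n =>
    have n2 : ∀ᵐ z ∂μ, Irrational z := by
      rw [ae_iff]
      have : {z : ℝ | ¬ Irrational z} = range ((↑) : ℚ → ℝ) := by
        ext z; simp [Irrational]
      rw [this]
      exact (countable_range _).measure_zero μ
    rw [nu_eq, map_measureReal_apply (T_iter_meas _) measurableSet_Iio]
    show μ.real {y | y ∈ Set.Ioo (0 : ℝ) 1 ∧ Irrational y ∧ 1 / r y (n + 2) < x} = _
    apply measureReal_congr
    filter_upwards [n1, n2] with z a b
    apply propext
    have e := inv_r b (n + 1)
    constructor
    · rintro ⟨_, _, h⟩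
      rw [e] at h
      exact h
    · intro h
      refine ⟨⟨lt_of_le_of_ne a.1 b.ne_zero.symm, lt_of_le_of_ne a.2 b.ne_one⟩, b, ?_⟩
      rw [e]
      exact h

lemma base_dens (μ : Measure ℝ) [IsProbabilityMeasure μ] [NullSingletonClass μ]
    (hμ : μ (Set.Icc (0 : ℝ) 1)ᶜ = 0)
    (h0 : ContDiffOn ℝ 2 (H μ 0) (Set.Icc (0 : ℝ) 1)) :
    ∃ f M, 0 ≤ M ∧ LipW f M ∧ Dens μ f := by
  have ud := uniqueDiffOn_Icc (zero_lt_one (α := ℝ))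
  have c1 : ContDiffOn ℝ 1 (derivWithin (H μ 0) (Icc 0 1)) (Icc 0 1) :=
    h0.derivWithin ud (by norm_num)
  have c2 : ContDiffOn ℝ 1 (fun t => derivWithin (H μ 0) (Icc 0 1) t * PP t) (Icc 0 1) :=
    c1.mul PP_contDiff.contDiffOn
  obtain ⟨M, M0, hM⟩ := base_lip c2
  refine ⟨_, M, M0, hM, ?_⟩
  intro x x0 x1
  have e : ∫ t in (0:ℝ)..x, derivWithin (H μ 0) (Icc 0 1) t * PP t * rho t =
      ∫ t in (0:ℝ)..x, derivWithin (H μ 0) (Icc 0 1) t := by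
    apply intervalIntegral.integral_congr
    intro t ht
    rw [uIcc_of_le x0] at ht
    simp only
    rw [mul_assoc, rho, PP_rho ht.1 (ht.2.trans x1), mul_one]
  rw [e, intervalIntegral.integral_eq_sub_of_hasDerivAt_of_le (f := H μ 0) x0]
  · have z : H μ 0 0 = 0 := by
      show (μ (Icc 0 0)).toReal = 0
      simp
    rw [z, sub_zero, H_eq μ hμ 0 x]
    rfl
  · exact h0.continuousOn.mono (Icc_subset_Icc le_rfl x1)
  · intro t ht
    have mem : t ∈ Icc (0:ℝ) 1 := ⟨ht.1.le, ht.2.le.trans x1⟩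
    have d := (h0.differentiableOn two_ne_zero t mem).hasDerivWithinAt
    exact d.hasDerivAt (Icc_mem_nhds ht.1 (ht.2.trans_le x1))
  · exact (c1.continuousOn.mono (Icc_subset_Icc le_rfl x1)).intervalIntegrable_of_Icc x0

lemma iter_dens (μ : Measure ℝ) [IsProbabilityMeasure μ] [NullSingletonClass μ]
    (hμ : μ (Set.Icc (0 : ℝ) 1)ᶜ = 0)
    {f : ℝ → ℝ} {M : ℝ} (hM : 0 ≤ M) (hf : LipW f M) (hd : Dens μ f) (n : ℕ) :
    ∃ f, LipW f (M * 0.37 ^ n) ∧ Dens (nu μ n) f := by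
  induction n with
  | zero => exact ⟨f, by simpa using hf, hd⟩
  | succ n ih =>
    obtain ⟨f, a, b⟩ := ih
    obtain ⟨i1, i2, i3⟩ := nu_props μ hμ n
    have M0 : 0 ≤ M * 0.37 ^ n := by positivity
    refine ⟨U f, ?_, ?_⟩
    · have := U_contr M0 a
      rwa [mul_assoc, ← pow_succ] at this
    · exact Dens.step i3 a.continuousOn (fun t ht => a.bdd M0 ht) b

lemma rho_integral {x : ℝ} (h0 : 0 ≤ x) (h1 : x ≤ 1) :
    ∫ t in (0:ℝ)..x, rho t = Real.log ((G + 1) * (G - 1 + x) / ((G - 1) * (G + 1 - x))) := by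
  have hG := G_lo
  have := intervalIntegral.integral_eq_sub_of_hasDerivAt_of_le
    (f := fun t => Real.log (t + G - 1) - Real.log (G + 1 - t)) (f' := rho) h0 ?_ ?_ ?_
  · rw [this, Real.log_div, Real.log_mul, Real.log_mul]
    · simp only [zero_add, sub_zero]
      rw [show G - 1 + x = x + G - 1 by ring]
      ring
    all_goals first | (apply ne_of_gt; linarith) | (apply mul_ne_zero <;> apply ne_of_gt <;> linarith)
  · apply ContinuousOn.sub
    · apply ContinuousOn.log (by fun_prop)
      intro t ht; linarith [ht.1]
    · apply ContinuousOn.log (by fun_prop)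
      intro t ht; linarith [ht.2]
  · intro t ht
    have a : HasDerivAt (fun t : ℝ => t + G - 1) 1 t := ((hasDerivAt_id t).add_const G).sub_const 1
    have b : HasDerivAt (fun t : ℝ => G + 1 - t) (-1) t := (hasDerivAt_id t).const_sub (G + 1)
    refine ((a.log (by linarith [ht.1])).sub (b.log (by linarith [ht.2]))).congr_deriv ?_
    unfold rho; ring
  · exact (rho_cont.mono (Icc_subset_Icc le_rfl h1)).intervalIntegrable_of_Icc h0

lemma logG_pos : 0 < Real.log G := Real.log_pos (by linarith [G_lo])

lemma rho_total : ∫ t in (0:ℝ)..1, rho t = 3 * Real.log G := by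
  have hG := G_lo
  rw [rho_integral zero_le_one le_rfl]
  have : (G + 1) * (G - 1 + 1) / ((G - 1) * (G + 1 - 1)) = G ^ 3 := by
    have : G - 1 ≠ 0 := by linarith
    have : G ≠ 0 := by linarith
    rw [div_eq_iff (by ring_nf; apply ne_of_gt; nlinarith)]
    linear_combination (-G ^ 3 - G) * G_sq
  rw [this, Real.log_pow]
  norm_num

lemma int_bound {k : ℝ → ℝ} {d x : ℝ} (h0 : 0 ≤ x) (h1 : x ≤ 1)
    (hk : ∀ t ∈ Icc (0:ℝ) x, |k t| ≤ d) :
    |∫ t in (0:ℝ)..x, k t * rho t| ≤ d * ∫ t in (0:ℝ)..x, rho t := by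
  have i : IntervalIntegrable rho volume 0 x :=
    (rho_cont.mono (Icc_subset_Icc le_rfl h1)).intervalIntegrable_of_Icc h0
  rw [← intervalIntegral.integral_const_mul, ← Real.norm_eq_abs]
  apply intervalIntegral.norm_integral_le_of_norm_le h0
  · refine Eventually.of_forall fun t ht => ?_
    have p := rho_pos ht.1.le (ht.2.trans h1)
    rw [Real.norm_eq_abs, abs_mul, abs_of_pos p]
    exact mul_le_mul_of_nonneg_right (hk t ⟨ht.1.le, ht.2⟩) p.le
  · exact i.const_mul d

lemma final_bound {ν : Measure ℝ} [IsProbabilityMeasure ν] [NullSingletonClass ν]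
    (hν : ν (Set.Icc (0 : ℝ) 1)ᶜ = 0) {f : ℝ → ℝ} {M : ℝ} (hM : 0 ≤ M) (hf : LipW f M)
    (hd : Dens ν f) {x : ℝ} (h0 : 0 ≤ x) (h1 : x ≤ 1) :
    |ν.real (Iio x) - (3 * Real.log G)⁻¹ * ∫ t in (0:ℝ)..x, rho t| ≤
      M * W 1 * (3 * Real.log G) := by
  have lg := logG_pos
  set L := 3 * Real.log G with hL
  have L0 : 0 < L := by positivity
  have fc := hf.continuousOn
  have W1 : 0 ≤ W 1 := W_nonneg (right_mem_Icc.2 zero_le_one)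
  have osc : ∀ s ∈ Icc (0:ℝ) 1, ∀ t ∈ Icc (0:ℝ) 1, |f s - f t| ≤ M * W 1 := by
    intro s hs t ht
    have key : ∀ s ∈ Icc (0:ℝ) 1, ∀ t ∈ Icc (0:ℝ) 1, s ≤ t → |f t - f s| ≤ M * W 1 := by
      intro s hs t ht hst
      refine (hf s t hs.1 hst ht.2).trans (mul_le_mul_of_nonneg_left ?_ hM)
      have a := W_nonneg hs
      have b := (le_abs_self _).trans (W_bdd ht)
      linarith
    rcases le_total s t with h | h
    · rw [abs_sub_comm]; exact key s hs t ht h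
    · exact key t ht s hs h
  have ir : ∀ x, 0 ≤ x → x ≤ 1 → IntervalIntegrable rho volume 0 x := fun x h0 h1 =>
    (rho_cont.mono (Icc_subset_Icc le_rfl h1)).intervalIntegrable_of_Icc h0
  have ifr : ∀ x, 0 ≤ x → x ≤ 1 → IntervalIntegrable (fun t => f t * rho t) volume 0 x :=
    fun x h0 h1 =>
    ((fc.mul rho_cont).mono (Icc_subset_Icc le_rfl h1)).intervalIntegrable_of_Icc h0
  have tot : ∫ t in (0:ℝ)..1, f t * rho t = 1 := by
    rw [← hd 1 zero_le_one le_rfl, supp_real hν]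
  have pt : ∀ s ∈ Icc (0:ℝ) 1, |f s - L⁻¹| ≤ M * W 1 := by
    intro s hs
    have b := int_bound (k := fun t => f s - f t) zero_le_one le_rfl (osc s hs)
    rw [rho_total, ← hL] at b
    have e : ∫ t in (0:ℝ)..1, (f s - f t) * rho t = L * (f s - L⁻¹) := by
      simp only [sub_mul]
      rw [intervalIntegral.integral_sub ((ir 1 zero_le_one le_rfl).const_mul _)
        (ifr 1 zero_le_one le_rfl), intervalIntegral.integral_const_mul, rho_total, tot, ← hL]
      field_simp
    rw [e, abs_mul, abs_of_pos L0, mul_comm] at b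
    exact le_of_mul_le_mul_right b L0
  have b := int_bound (k := fun t => f t - L⁻¹) h0 h1
    (fun t ht => pt t ⟨ht.1, ht.2.trans h1⟩)
  have e : ∫ t in (0:ℝ)..x, (f t - L⁻¹) * rho t =
      ν.real (Iio x) - L⁻¹ * ∫ t in (0:ℝ)..x, rho t := by
    simp only [sub_mul]
    rw [intervalIntegral.integral_sub (ifr x h0 h1) ((ir x h0 h1).const_mul _),
      intervalIntegral.integral_const_mul, hd x h0 h1]
  rw [e] at b
  refine b.trans (mul_le_mul_of_nonneg_left ?_ (by positivity))
  rw [hL, ← rho_total]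
  apply intervalIntegral.integral_mono_interval le_rfl h0 h1
  · rw [EventuallyLE, ae_restrict_iff' measurableSet_Ioc]
    exact Eventually.of_forall fun t ht => (rho_pos ht.1.le ht.2).le
  · exact ir 1 zero_le_one le_rfl

end OCF
/-- Gauss–Kuzmin-type theorem: if `H_0` is twice continuously differentiable on `[0,1]`, then
with `η = 4g Σ_{i odd} 1/((G+i) i (i+2)) ∈ (0,1)` there is a constant `C > 0` such that for all
`n ≥ 0` and `x ∈ [0,1]`,
`|H_n(x) - (3 log G)⁻¹ log((G+1)(G-1+x)/((G-1)(G+1-x)))| ≤ C ηⁿ`. -/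
theorem ocf_gauss_kuzmin_theorem (μ : Measure ℝ) [IsProbabilityMeasure μ] [NullSingletonClass μ]
    (hμ : μ (Set.Icc (0 : ℝ) 1)ᶜ = 0)
    (h0 : ContDiffOn ℝ 2 (H μ 0) (Set.Icc (0 : ℝ) 1)) :
    (0 < eta ∧ eta < 1) ∧
    ∃ C : ℝ, 0 < C ∧ ∀ n : ℕ, ∀ x ∈ Set.Icc (0 : ℝ) 1,
      |H μ n x - (3 * Real.log G)⁻¹ *
          Real.log ((G + 1) * (G - 1 + x) / ((G - 1) * (G + 1 - x)))| ≤ C * eta ^ n := by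
  have e0 := eta_ge
  have e0' : 0 < eta := lt_of_lt_of_le (by norm_num) e0
  refine ⟨⟨e0', eta_lt_one⟩, ?_⟩
  obtain ⟨f, M, M0, hf, hd⟩ := base_dens μ hμ h0
  have lg := logG_pos
  have W1 : 0 ≤ W 1 := W_nonneg (right_mem_Icc.2 zero_le_one)
  refine ⟨M * W 1 * (3 * Real.log G) + 1, by positivity, ?_⟩
  intro n x hx
  obtain ⟨k, hk, kd⟩ := iter_dens μ hμ M0 hf hd n
  obtain ⟨i1, i2, i3⟩ := nu_props μ hμ n
  have b := final_bound i3 (by positivity) hk kd hx.1 hx.2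
  rw [rho_integral hx.1 hx.2, ← H_eq μ hμ] at b
  refine b.trans ?_
  have p : (0.37 : ℝ) ^ n ≤ eta ^ n := pow_le_pow_left₀ (by norm_num) e0 n
  have ep : 0 < eta ^ n := by positivity
  have c : 0 ≤ M * W 1 * (3 * Real.log G) := by positivity
  have := mul_le_mul_of_nonneg_left p c
  linarith
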